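/- arXiv:gr-qc/0310040 — 2 statements merged into one kernel-verified Lean document; each statement's English description precedes it below -/
import Mathlib

section
/- Global existence for the characteristic problem Γ: Fix α > 1 and suppose R satisfies R ≥ 1, R > (4α/(α−1))², R > α⁻²(1 + 16α⁴M)², R > 8α²M/log α, 6α²C² < (α−1)MR, and R > 4α²M/(α−1). Let (r, m, φ) be the maximal development on D of characteristic initial conditions with parameters C, M, m₀ (maximal meaning: any solution on a relatively open past set D̃ ⊆ Q_R containing the initial rays and attaining the same data satisfies D̃ ⊆ D and agrees with (r, m, φ) on D̃). Then D = Q_R, i.e., the solution exists on the entire quadrant (−∞, −R] × [R, ∞). -/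
/-!
The maximal development contains every development of the same data, so it suffices to construct a
solution on all of `Quad R` that attains the data of the given one; maximality then gives
`Quad R ⊆ D`. No extension argument at the boundary of `D` is needed.

Put `x = -u - R`, `y = v - R`, `ψ = r φ`, `σ = ∂ₓ r`, `λ = ∂_y r`, `p = ∂ₓ ψ`. The field equations
imply the first-order system
`∂_y σ = ∂ₓ λ = N`, `∂_y p = N ψ / r`, `∂ₓ ψ = p`, `∂ₓ r = σ`, `∂ₓ m = H`, where
`N = 2 m σ λ / (r (r - 2 m))` and `H = (r - 2 m) (p - σ ψ / r)² / (2 r σ)`; its data are those of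
`σ`, `p` on `y = 0` and of `λ`, `m`, `ψ`, `r` on `x = 0`.

* *Existence and bounds* (`exists_goursat`, `exists_core`). Truncate the unknowns on the right-hand
  sides to `1 ≤ σ, λ ≤ 2`, `0 ≤ m ≤ α M`, `|ψ| ≤ α C`, `|p| ≤ (1 + 8 α² M) C / (R + x)²`,
  `r ≥ R + x + y`. The right-hand sides become bounded and globally Lipschitz, and the integral
  equations have a solution on the whole quadrant, by contraction in a sup norm with an exponential
  weight. The truncated right-hand sides decay: `N = O((R + x + y)⁻²)`,
  `N ψ / r = O((R + x + y)⁻³)`, `H = O((R + x)⁻²)`. Integrating these bounds and using that `R` is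
  large (`largeness`), the solution stays inside the truncation region, and so it solves the
  original system.
* *The remaining equations* (`exists_global`). Differentiating the integral formulas gives
  `∂_y r = λ` and the existence of `q = ∂_y ψ`, whence both wave equations. The solution is `C²` by
  transfer of regularity along linear equations (`CY_of_linear`). The mass equation in the
  `y`-direction holds on `x = 0`, and its defect satisfies a homogeneous linear equation in `x`, so
  it holds everywhere.
* *Data* (`exists_EFSol_Quad`). The data are read off from the given solution on the two rays. On
  `x = 0` the mass is nonnegative because it is nondecreasing and `m₀ ≥ 0`. On `y = 0` the mass is
  not prescribed; it agrees with the given one because both solve the same linear equation in `x`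
  with the same value at the corner (`edge_values`).
-/

open Set Real

noncomputable section

/-- The quadrant `Q_R = (-∞, -R] × [R, ∞)` in null coordinates `(u, v)`. -/
def Quad (R : ℝ) : Set (ℝ × ℝ) := Iic (-R) ×ˢ Ici R

/-- Partial derivative in the `u` (first) direction, within the set `D`. -/
def pdu (D : Set (ℝ × ℝ)) (f : ℝ × ℝ → ℝ) (p : ℝ × ℝ) : ℝ :=
  fderivWithin ℝ f D p (1, 0)

/-- Partial derivative in the `v` (second) direction, within the set `D`. -/
def pdv (D : Set (ℝ × ℝ)) (f : ℝ × ℝ → ℝ) (p : ℝ × ℝ) : ℝ :=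
  fderivWithin ℝ f D p (0, 1)

/-- `D` is a past set in `Q_R`: with `(u,v) ∈ D`, any `(ũ,ṽ) ∈ Q_R` with
`ũ ≥ u`, `ṽ ≤ v` lies in `D`. -/
def IsPastSet (R : ℝ) (D : Set (ℝ × ℝ)) : Prop :=
  ∀ p ∈ D, ∀ q ∈ Quad R, p.1 ≤ q.1 → q.2 ≤ p.2 → q ∈ D

/-- A solution of the spherically symmetric Einstein–scalar field system on a
relatively open subset `D ⊆ Q_R`.  Writing `ν = ∂r/∂u`, `λ = ∂r/∂v`,
`ζ = r ∂φ/∂u`, `θ = r ∂φ/∂v`, `μ = 2m/r`, the equations are: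
`∂λ/∂u = λ (2ν/(1-μ)) (m/r²)`, `∂ν/∂v = ν (2λ/(1-μ)) (m/r²)`,
`ν ∂m/∂u = ½(1-μ)ζ²`, `λ ∂m/∂v = ½(1-μ)θ²`,
`∂θ/∂u = -ζλ/r`, `∂ζ/∂v = -θν/r`. -/
structure EFSol (R : ℝ) (D : Set (ℝ × ℝ)) (r m φ : ℝ × ℝ → ℝ) : Prop where
  subset : D ⊆ Quad R
  relOpen : ∃ U : Set (ℝ × ℝ), IsOpen U ∧ D = U ∩ Quad R
  hr : ContDiffOn ℝ 2 r D
  hm : ContDiffOn ℝ 2 m D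
  hphi : ContDiffOn ℝ 2 φ D
  rpos : ∀ p ∈ D, 0 < r p
  mu_ne : ∀ p ∈ D, 2 * m p ≠ r p
  eq_lam : ∀ p ∈ D, pdu D (fun q => pdv D r q) p
      = pdv D r p * (2 * pdu D r p / (1 - 2 * m p / r p)) * (m p / (r p) ^ 2)
  eq_nu : ∀ p ∈ D, pdv D (fun q => pdu D r q) p
      = pdu D r p * (2 * pdv D r p / (1 - 2 * m p / r p)) * (m p / (r p) ^ 2)
  eq_mu : ∀ p ∈ D, pdu D r p * pdu D m p
      = (1 / 2) * (1 - 2 * m p / r p) * (r p * pdu D φ p) ^ 2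
  eq_mv : ∀ p ∈ D, pdv D r p * pdv D m p
      = (1 / 2) * (1 - 2 * m p / r p) * (r p * pdv D φ p) ^ 2
  eq_theta : ∀ p ∈ D, pdu D (fun q => r q * pdv D φ q) p
      = -(r p * pdu D φ p) * pdv D r p / r p
  eq_zeta : ∀ p ∈ D, pdv D (fun q => r q * pdu D φ q) p
      = -(r p * pdv D φ p) * pdu D r p / r p

/-- Characteristic initial conditions with parameters `C`, `M`, `m₀`, posed on the
rays `{-R} × [R,∞)` (where `λ = 1`, `|rφ| ≤ C`, `m ≤ M`) and
`(-∞,-R] × {R}` (where `ν = -1`, `|∂_u(rφ)| ≤ C/u²`, `m ≤ M`), with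
`r(-R,R) = R` and `m(-R,R) = m₀`, on a past set `D`. -/
structure CharIC (R C M m₀ : ℝ) (D : Set (ℝ × ℝ)) (r m φ : ℝ × ℝ → ℝ) : Prop where
  past : IsPastSet R D
  ray_out : ∀ v ≥ R, ((-R, v) : ℝ × ℝ) ∈ D
  ray_in : ∀ u ≤ -R, ((u, R) : ℝ × ℝ) ∈ D
  r_corner : r (-R, R) = R
  m_corner : m (-R, R) = m₀
  lam_one : ∀ v ≥ R, pdv D r (-R, v) = 1
  rphi_bound : ∀ v ≥ R, |r (-R, v) * φ (-R, v)| ≤ C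
  m_bound_out : ∀ v ≥ R, m (-R, v) ≤ M
  nu_one : ∀ u ≤ -R, pdu D r (u, R) = -1
  durphi_bound : ∀ u ≤ -R, |pdu D (fun q => r q * φ q) (u, R)| ≤ C / u ^ 2
  m_bound_in : ∀ u ≤ -R, m (u, R) ≤ M

end

open Set Real

/-- `(r, m, φ)` on `D` is the maximal development of its characteristic data:
any solution on a relatively open past set `D' ⊆ Q_R` containing the initial
rays and attaining the same data (the values of `r`, `m`, `φ` on both rays)
satisfies `D' ⊆ D` and agrees with `(r, m, φ)` on `D'`. -/
def IsMaximalDev (R : ℝ) (D : Set (ℝ × ℝ)) (r m φ : ℝ × ℝ → ℝ) : Prop :=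
  ∀ D' : Set (ℝ × ℝ), ∀ r' m' φ' : ℝ × ℝ → ℝ,
    IsPastSet R D' → (∀ v ≥ R, ((-R, v) : ℝ × ℝ) ∈ D') →
    (∀ u ≤ -R, ((u, R) : ℝ × ℝ) ∈ D') →
    EFSol R D' r' m' φ' →
    (∀ v ≥ R, r' (-R, v) = r (-R, v) ∧ m' (-R, v) = m (-R, v) ∧
      φ' (-R, v) = φ (-R, v)) →
    (∀ u ≤ -R, r' (u, R) = r (u, R) ∧ m' (u, R) = m (u, R) ∧
      φ' (u, R) = φ (u, R)) →
    D' ⊆ D ∧ EqOn r' r D' ∧ EqOn m' m D' ∧ EqOn φ' φ D'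

/-! ### Functions on the quadrant with continuous partial derivatives -/

/-- The closed quadrant `[0,∞)²` in the shifted coordinates `x = -u - R`, `y = v - R`. -/
def QQ : Set (ℝ × ℝ) := Ici 0 ×ˢ Ici 0

/-- The coordinate swap acting on functions; it exchanges the roles of the two null directions. -/
def sw (f : ℝ × ℝ → ℝ) : ℝ × ℝ → ℝ := fun p => f (p.2, p.1)

/-- `f` is continuous on the quadrant and has the continuous `x`-derivative `f'` there
(one-sided on the edge `x = 0`). -/
structure PX (f f' : ℝ × ℝ → ℝ) : Prop where
  cont : ContinuousOn f QQ
  cont' : ContinuousOn f' QQ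
  deriv : ∀ x, 0 ≤ x → ∀ y, 0 ≤ y →
    HasDerivWithinAt (fun t => f (t, y)) (f' (x, y)) (Ici 0) x

/-- `f` is continuous on the quadrant and has the continuous `y`-derivative `f'` there. -/
def PY (f f' : ℝ × ℝ → ℝ) : Prop := PX (sw f) (sw f')

/-- `f` has some continuous `x`-derivative on the quadrant. -/
def CX (f : ℝ × ℝ → ℝ) : Prop := ∃ f', PX f f'

/-- `f` has some continuous `y`-derivative on the quadrant. -/
def CY (f : ℝ × ℝ → ℝ) : Prop := CX (sw f)

/-- The primitive of `h` in the `x`-direction, vanishing on `x = 0`. -/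
noncomputable def intX (h : ℝ × ℝ → ℝ) : ℝ × ℝ → ℝ := fun p => ∫ t in (0 : ℝ)..p.1, h (t, p.2)

/-- The primitive of `h` in the `y`-direction, vanishing on `y = 0`. -/
noncomputable def intY (h : ℝ × ℝ → ℝ) : ℝ × ℝ → ℝ := fun p => ∫ t in (0 : ℝ)..p.2, h (p.1, t)

lemma mem_QQ {x y : ℝ} (hx : 0 ≤ x) (hy : 0 ≤ y) : ((x, y) : ℝ × ℝ) ∈ QQ := ⟨hx, hy⟩

lemma cont_sw {f : ℝ × ℝ → ℝ} (hf : ContinuousOn f QQ) : ContinuousOn (sw f) QQ :=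
  hf.comp (by fun_prop) (fun p hp => ⟨hp.2, hp.1⟩)

lemma cont_unsw {f : ℝ × ℝ → ℝ} (hf : ContinuousOn (sw f) QQ) : ContinuousOn f QQ :=
  cont_sw hf

lemma PX.sw {f f' : ℝ × ℝ → ℝ} (h : PX f f') : PY (sw f) (sw f') := h

lemma PX.cx {f f' : ℝ × ℝ → ℝ} (h : PX f f') : CX f := ⟨f', h⟩

lemma PY.cy {f f' : ℝ × ℝ → ℝ} (h : PY f f') : CY f := ⟨_, h⟩

lemma PX.congr {f f' g g' : ℝ × ℝ → ℝ} (h : PX f f') (hf : EqOn g f QQ) (hf' : EqOn g' f' QQ) :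
    PX g g' where
  cont := h.cont.congr hf
  cont' := h.cont'.congr hf'
  deriv x hx y hy := by
    rw [hf' (mem_QQ hx hy)]
    exact (h.deriv x hx y hy).congr (fun t ht => hf (mem_QQ ht hy)) (hf (mem_QQ hx hy))

lemma eqOn_sw {f g : ℝ × ℝ → ℝ} (h : EqOn f g QQ) : EqOn (sw f) (sw g) QQ :=
  fun _ hp => h ⟨hp.2, hp.1⟩

lemma PY.congr {f f' g g' : ℝ × ℝ → ℝ} (h : PY f f') (hf : EqOn g f QQ) (hf' : EqOn g' f' QQ) :
    PY g g' :=
  PX.congr h (eqOn_sw hf) (eqOn_sw hf')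

lemma CX.congr {f g : ℝ × ℝ → ℝ} (h : CX f) (hf : EqOn g f QQ) : CX g :=
  h.elim fun _ h => ⟨_, h.congr hf (fun _ _ => rfl)⟩

lemma CX.cont {f : ℝ × ℝ → ℝ} (h : CX f) : ContinuousOn f QQ := h.elim fun _ h => h.cont

lemma PX.unique {f f' g' : ℝ × ℝ → ℝ} (h : PX f f') (h' : PX f g') : EqOn f' g' QQ := by
  rintro ⟨x, y⟩ ⟨hx, hy⟩
  exact (uniqueDiffOn_Ici (0 : ℝ) x hx).eq_deriv _ (h.deriv x hx y hy) (h'.deriv x hx y hy)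

lemma PX.of_y {g : ℝ → ℝ} (hg : ContinuousOn g (Ici 0)) :
    PX (fun p => g p.2) (fun _ => 0) where
  cont := hg.comp (by fun_prop) (fun p hp => hp.2)
  cont' := continuousOn_const
  deriv x hx y hy := by simpa using hasDerivWithinAt_const x (Ici (0 : ℝ)) (g y)

lemma PX.const (c : ℝ) : PX (fun _ => c) (fun _ => 0) :=
  PX.of_y (g := fun _ => c) continuousOn_const

lemma PX.of_x {g g' : ℝ → ℝ} (hg' : ContinuousOn g' (Ici 0))
    (h : ∀ x, 0 ≤ x → HasDerivWithinAt g (g' x) (Ici 0) x) :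
    PX (fun p => g p.1) (fun p => g' p.1) where
  cont := ContinuousOn.comp (t := Ici 0) (fun x hx => (h x hx).continuousWithinAt)
    (by fun_prop) (fun p hp => hp.1)
  cont' := hg'.comp (by fun_prop) (fun p hp => hp.1)
  deriv x hx y hy := h x hx

lemma PX.add {f f' g g' : ℝ × ℝ → ℝ} (hf : PX f f') (hg : PX g g') :
    PX (fun p => f p + g p) (fun p => f' p + g' p) where
  cont := hf.cont.add hg.cont
  cont' := hf.cont'.add hg.cont'
  deriv x hx y hy := (hf.deriv x hx y hy).fun_add (hg.deriv x hx y hy)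

lemma PX.sub {f f' g g' : ℝ × ℝ → ℝ} (hf : PX f f') (hg : PX g g') :
    PX (fun p => f p - g p) (fun p => f' p - g' p) where
  cont := hf.cont.sub hg.cont
  cont' := hf.cont'.sub hg.cont'
  deriv x hx y hy := (hf.deriv x hx y hy).fun_sub (hg.deriv x hx y hy)

lemma PX.mul {f f' g g' : ℝ × ℝ → ℝ} (hf : PX f f') (hg : PX g g') :
    PX (fun p => f p * g p) (fun p => f' p * g p + f p * g' p) where
  cont := hf.cont.mul hg.cont
  cont' := (hf.cont'.mul hg.cont).add (hf.cont.mul hg.cont')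
  deriv x hx y hy := (hf.deriv x hx y hy).fun_mul (hg.deriv x hx y hy)

lemma PX.div {f f' g g' : ℝ × ℝ → ℝ} (hf : PX f f') (hg : PX g g') (h0 : ∀ p ∈ QQ, g p ≠ 0) :
    PX (fun p => f p / g p) (fun p => (f' p * g p - f p * g' p) / g p ^ 2) where
  cont := hf.cont.div hg.cont h0
  cont' := ((hf.cont'.mul hg.cont).sub (hf.cont.mul hg.cont')).div (hg.cont.pow 2)
    (fun p hp => pow_ne_zero 2 (h0 p hp))
  deriv x hx y hy :=
    (hf.deriv x hx y hy).fun_div (hg.deriv x hx y hy) (h0 _ (mem_QQ hx hy))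

lemma PX.exp {f f' : ℝ × ℝ → ℝ} (hf : PX f f') :
    PX (fun p => Real.exp (f p)) (fun p => Real.exp (f p) * f' p) where
  cont := hf.cont.rexp
  cont' := hf.cont.rexp.mul hf.cont'
  deriv x hx y hy := (hf.deriv x hx y hy).exp

lemma CX.const (c : ℝ) : CX (fun _ => c) := (PX.const c).cx

lemma CX.add {f g : ℝ × ℝ → ℝ} (hf : CX f) (hg : CX g) : CX (fun p => f p + g p) :=
  hf.elim fun _ hf => hg.elim fun _ hg => (hf.add hg).cx

lemma CX.sub {f g : ℝ × ℝ → ℝ} (hf : CX f) (hg : CX g) : CX (fun p => f p - g p) :=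
  hf.elim fun _ hf => hg.elim fun _ hg => (hf.sub hg).cx

lemma CX.mul {f g : ℝ × ℝ → ℝ} (hf : CX f) (hg : CX g) : CX (fun p => f p * g p) :=
  hf.elim fun _ hf => hg.elim fun _ hg => (hf.mul hg).cx

lemma CX.div {f g : ℝ × ℝ → ℝ} (hf : CX f) (hg : CX g) (h0 : ∀ p ∈ QQ, g p ≠ 0) :
    CX (fun p => f p / g p) :=
  hf.elim fun _ hf => hg.elim fun _ hg => (hf.div hg h0).cx

lemma CX.exp {f : ℝ × ℝ → ℝ} (hf : CX f) : CX (fun p => Real.exp (f p)) :=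
  hf.elim fun _ hf => hf.exp.cx

/-- The retraction of the plane onto the quadrant. -/
def pr (p : ℝ × ℝ) : ℝ × ℝ := (max p.1 0, max p.2 0)

lemma pr_mem (p : ℝ × ℝ) : pr p ∈ QQ :=
  mem_QQ (le_max_right _ _) (le_max_right _ _)

lemma pr_eq {p : ℝ × ℝ} (hp : p ∈ QQ) : pr p = p :=
  Prod.ext (max_eq_left hp.1) (max_eq_left hp.2)

lemma cont_pr {h : ℝ × ℝ → ℝ} (hh : ContinuousOn h QQ) : Continuous (fun p => h (pr p)) := by
  refine hh.comp_continuous ?_ pr_mem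
  unfold pr; fun_prop

lemma intX_pr {h : ℝ × ℝ → ℝ} {p : ℝ × ℝ} (hp : p ∈ QQ) :
    intX (fun q => h (pr q)) p = intX h p := by
  refine intervalIntegral.integral_congr fun t ht => ?_
  rw [uIcc_of_le hp.1] at ht
  simp only [pr_eq (mem_QQ ht.1 hp.2)]

lemma intY_pr {h : ℝ × ℝ → ℝ} {p : ℝ × ℝ} (hp : p ∈ QQ) :
    intY (fun q => h (pr q)) p = intY h p := by
  refine intervalIntegral.integral_congr fun t ht => ?_
  rw [uIcc_of_le hp.2] at ht
  simp only [pr_eq (mem_QQ hp.1 ht.1)]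

lemma continuous_intX {h : ℝ × ℝ → ℝ} (hh : Continuous h) : Continuous (intX h) := by
  unfold intX
  exact intervalIntegral.continuous_parametric_intervalIntegral_of_continuous
    (f := fun (p : ℝ × ℝ) t => h (t, p.2)) (by unfold Function.uncurry; fun_prop) continuous_fst

lemma cont_intX {h : ℝ × ℝ → ℝ} (hh : ContinuousOn h QQ) : ContinuousOn (intX h) QQ :=
  (continuous_intX (cont_pr hh)).continuousOn.congr fun _ hp => (intX_pr hp).symm

lemma PX_intX {h : ℝ × ℝ → ℝ} (hh : ContinuousOn h QQ) : PX (intX h) h := by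
  have key : PX (intX (fun q => h (pr q))) (fun q => h (pr q)) :=
    { cont := (continuous_intX (cont_pr hh)).continuousOn
      cont' := (cont_pr hh).continuousOn
      deriv := fun x hx y hy => by
        have hc : Continuous (fun t : ℝ => h (pr (t, y))) :=
          (cont_pr hh).comp (by fun_prop : Continuous fun t : ℝ => (t, y))
        exact (hc.integral_hasStrictDerivAt 0 x).hasDerivAt.hasDerivWithinAt }
  exact key.congr (fun p hp => (intX_pr hp).symm) (fun p hp => by simp only [pr_eq hp])

lemma PX.ftc {f f' : ℝ × ℝ → ℝ} (h : PX f f') {p : ℝ × ℝ} (hp : p ∈ QQ) :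
    f p = f (0, p.2) + intX f' p := by
  obtain ⟨x, y⟩ := p
  obtain ⟨hx, hy⟩ := hp
  have hi : ContinuousOn (fun t => f' (t, y)) (Icc 0 x) :=
    h.cont'.comp (by fun_prop) (fun t ht => mem_QQ ht.1 hy)
  have hi2 : ContinuousOn (fun t => f (t, y)) (Icc 0 x) :=
    h.cont.comp (by fun_prop) (fun t ht => mem_QQ ht.1 hy)
  have := intervalIntegral.integral_eq_sub_of_hasDerivAt_of_le (f := fun t => f (t, y))
    (f' := fun t => f' (t, y)) hx hi2
    (fun t ht => (h.deriv t ht.1.le y hy).hasDerivAt (Ici_mem_nhds ht.1))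
    (by apply ContinuousOn.intervalIntegrable; rwa [uIcc_of_le hx])
  simp only [intX]
  linarith

/-- Differentiation under the integral sign, in the form needed here; it follows from the
fundamental theorem of calculus and Fubini's theorem. -/
lemma PX_intY {h h' : ℝ × ℝ → ℝ} (hh : PX h h') : PX (intY h) (intY h') := by
  have c' : ContinuousOn (intY h') QQ := cont_unsw (cont_intX (cont_sw hh.cont'))
  have c0 : ContinuousOn (fun y => intY h (0, y)) (Ici 0) :=
    ContinuousOn.comp (t := QQ) (cont_unsw (f := intY h) (cont_intX (cont_sw hh.cont)))
      (by fun_prop) (fun y hy => mem_QQ le_rfl hy)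
  have key := (PX.of_y c0).add (PX_intX c')
  refine key.congr ?_ (fun p _ => by simp)
  rintro ⟨x, y⟩ ⟨hx, hy⟩
  simp only
  have hx : 0 ≤ x := hx
  have hy : 0 ≤ y := hy
  -- replace the integrands by their continuous extensions to the plane before using Fubini
  have e1 : intY h (x, y) = ∫ t in (0 : ℝ)..y,
      (h (0, t) + ∫ τ in (0 : ℝ)..x, h' (pr (τ, t))) := by
    refine intervalIntegral.integral_congr fun t ht => ?_
    rw [uIcc_of_le hy] at ht
    have := hh.ftc (mem_QQ hx ht.1)
    rw [← intX_pr (mem_QQ hx ht.1)] at this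
    exact this
  have e2 : intX (intY h') (x, y) = ∫ τ in (0 : ℝ)..x, ∫ t in (0 : ℝ)..y, h' (pr (τ, t)) := by
    refine intervalIntegral.integral_congr fun t ht => ?_
    rw [uIcc_of_le hx] at ht
    exact (intY_pr (mem_QQ ht.1 hy)).symm
  have hc := cont_pr hh.cont'
  rw [e1, e2, intervalIntegral.integral_add, MeasureTheory.intervalIntegral_intervalIntegral_swap]
  · rfl
  · have hcc : Continuous (Function.uncurry fun t τ => h' (pr (τ, t))) :=
      hc.comp (by fun_prop : Continuous fun q : ℝ × ℝ => (q.2, q.1))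
    exact (hcc.continuousOn.integrableOn_compact
      (isCompact_uIcc.prod isCompact_uIcc)).mono_set
        (prod_mono uIoc_subset_uIcc uIoc_subset_uIcc)
  · apply ContinuousOn.intervalIntegrable
    rw [uIcc_of_le hy]
    exact hh.cont.comp (by fun_prop) (fun t ht => mem_QQ le_rfl ht.1)
  · apply Continuous.intervalIntegrable
    exact intervalIntegral.continuous_parametric_intervalIntegral_of_continuous'
      (f := fun t τ => h' (pr (τ, t))) (hc.comp (by fun_prop)) _ _

/-- Two continuous partial derivatives on the quadrant give a total derivative, up to the
boundary. -/
lemma PX.hasFDeriv {f a b : ℝ × ℝ → ℝ} (hx : PX f a) (hy : PY f b) {p : ℝ × ℝ} (hp : p ∈ QQ) :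
    HasFDerivWithinAt f (a p • ContinuousLinearMap.fst ℝ ℝ ℝ + b p • ContinuousLinearMap.snd ℝ ℝ ℝ)
      QQ p := by
  set S : Set (ℝ × ℝ) := Ioi 0 ×ˢ Ioi 0 with hS
  have hSo : IsOpen S := isOpen_Ioi.prod isOpen_Ioi
  have hSQ : S ⊆ QQ := prod_mono Ioi_subset_Ici_self Ioi_subset_Ici_self
  have hcl : closure S = QQ := by rw [hS, closure_prod_eq, closure_Ioi]; rfl
  have hby : ContinuousOn b QQ := cont_unsw hy.cont'
  have hder : ∀ q ∈ S, HasFDerivAt f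
      (a q • ContinuousLinearMap.fst ℝ ℝ ℝ + b q • ContinuousLinearMap.snd ℝ ℝ ℝ) q := by
    intro q hq
    have hSn : S ∈ nhds q := hSo.mem_nhds hq
    have hQn : QQ ∈ nhds q := Filter.mem_of_superset hSn hSQ
    have := (hasStrictFDerivAt_uncurry_coprod (𝕜 := ℝ) (u := q) (f := fun x y => f (x, y))
      (f₁ := fun x y => ContinuousLinearMap.toSpanSingleton ℝ (a (x, y)))
      (f₂ := fun x y => ContinuousLinearMap.toSpanSingleton ℝ (b (x, y)))
      (Filter.eventually_of_mem hSn fun z hz =>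
        ((hx.deriv z.1 (le_of_lt hz.1) z.2 (le_of_lt hz.2)).hasDerivAt
          (Ici_mem_nhds hz.1)).hasFDerivAt)
      (Filter.eventually_of_mem hSn fun z hz =>
        ((hy.deriv z.2 (le_of_lt hz.2) z.1 (le_of_lt hz.1)).hasDerivAt
          (Ici_mem_nhds hz.2)).hasFDerivAt)
      ?_ ?_).hasFDerivAt
    · refine this.congr_fderiv ?_
      ext <;> simp [Function.HasUncurry.uncurry]
    · have h1 : ContinuousAt a q := hx.cont'.continuousAt hQn
      exact (ContinuousLinearMap.toSpanSingletonCLE (𝕜 := ℝ) (E := ℝ)).continuous.continuousAt.comp h1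
    · have h1 : ContinuousAt b q := hby.continuousAt hQn
      exact (ContinuousLinearMap.toSpanSingletonCLE (𝕜 := ℝ) (E := ℝ)).continuous.continuousAt.comp h1
  rw [← hcl]
  refine hasFDerivWithinAt_closure_of_tendsto_fderiv
    (fun q hq => (hder q hq).differentiableAt.differentiableWithinAt)
    ((convex_Ioi 0).prod (convex_Ioi 0)) hSo (fun q hq => ?_) ?_
  · rw [hcl] at hq
    exact (hx.cont q hq).mono hSQ
  · have h1 : ContinuousWithinAt (fun q => a q • ContinuousLinearMap.fst ℝ ℝ ℝ
        + b q • ContinuousLinearMap.snd ℝ ℝ ℝ) S p :=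
      (((hx.cont' p hp).mono hSQ).smul continuousWithinAt_const).add
        (((hby p hp).mono hSQ).smul continuousWithinAt_const)
    refine h1.tendsto.congr' ?_
    filter_upwards [self_mem_nhdsWithin] with q hq using (hder q hq).fderiv.symm

lemma uniqueDiffOn_QQ : UniqueDiffOn ℝ QQ := (uniqueDiffOn_Ici 0).prod (uniqueDiffOn_Ici 0)

lemma PX.contDiffOn {f a b : ℝ × ℝ → ℝ} (hx : PX f a) (hy : PY f b) (n : ℕ)
    (ha : ContDiffOn ℝ n a QQ) (hb : ContDiffOn ℝ n b QQ) : ContDiffOn ℝ (n + 1) f QQ := by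
  rw [contDiffOn_succ_iff_hasFDerivWithinAt_of_uniqueDiffOn uniqueDiffOn_QQ]
  refine ⟨by simp, _, ?_, fun p hp => hx.hasFDeriv hy hp⟩
  exact (ha.smul contDiffOn_const).add (hb.smul contDiffOn_const)

lemma CX.contDiffOn {f : ℝ × ℝ → ℝ} (hx : CX f) (hy : CY f) : ContDiffOn ℝ 1 f QQ := by
  obtain ⟨a, ha⟩ := hx
  obtain ⟨b, hb⟩ := hy
  have := PX.contDiffOn (b := sw b) ha hb 0 (contDiffOn_zero.2 ha.cont')
    (contDiffOn_zero.2 (cont_sw hb.cont'))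
  simpa using this

/-- Regularity transfer for a linear equation `∂ₓ f = a f + c`: if the coefficients and the value
on `x = 0` are differentiable in `y`, so is `f`, by the integrating factor formula. -/
lemma CY_of_linear {f a c : ℝ × ℝ → ℝ} (hf : PX f (fun p => a p * f p + c p))
    (ha : CY a) (hc : CY c) (h0 : CY (fun p => f (0, p.2))) : CY f := by
  have ca : ContinuousOn a QQ := cont_unsw (CX.cont ha)
  have hA := PX_intX ca
  have hAy : CY (intX a) := by obtain ⟨a', ha'⟩ := ha; exact ⟨_, PX_intY ha'⟩
  have hneg : PX (fun p => 0 - intX a p) (fun p => 0 - a p) := (PX.const 0).sub hA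
  have hg := (hneg.exp.mul hf)
  have hg' : PX (fun p => Real.exp (0 - intX a p) * f p)
      (fun p => Real.exp (0 - intX a p) * c p) :=
    hg.congr (fun _ _ => rfl) (fun p _ => by ring)
  have hec : CY (fun p => Real.exp (0 - intX a p) * c p) :=
    CX.mul (CX.exp (CX.sub (CX.const 0) hAy)) hc
  have hI : CY (intX (fun p => Real.exp (0 - intX a p) * c p)) := by
    obtain ⟨_, h⟩ := hec; exact ⟨_, PX_intY h⟩
  have h1 : CY (fun p => Real.exp (intX a p) *
      (f (0, p.2) + intX (fun p => Real.exp (0 - intX a p) * c p) p)) :=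
    CX.mul (CX.exp hAy) (CX.add h0 hI)
  refine CX.congr h1 (eqOn_sw fun p hp => ?_)
  have h2 := hg'.ftc hp
  have h3 : intX a (0, p.2) = 0 := by simp [intX]
  simp only [h3, sub_zero, Real.exp_zero, one_mul] at h2
  rw [← h2, ← mul_assoc, ← Real.exp_add, add_sub_cancel, Real.exp_zero, one_mul]

/-- A solution of a homogeneous linear equation with zero initial value vanishes. -/
lemma zero_of_linear {f a : ℝ × ℝ → ℝ} (ha : ContinuousOn a QQ) (hf : PX f (fun p => a p * f p))
    (h0 : ∀ y, 0 ≤ y → f (0, y) = 0) : ∀ p ∈ QQ, f p = 0 := by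
  intro p hp
  have hneg : PX (fun p => 0 - intX a p) (fun p => 0 - a p) := (PX.const 0).sub (PX_intX ha)
  have hg : PX (fun p => Real.exp (0 - intX a p) * f p) (fun _ => 0) :=
    (hneg.exp.mul hf).congr (fun _ _ => rfl) (fun p _ => by ring)
  have h2 := hg.ftc hp
  simp only [h0 p.2 hp.2, mul_zero, intX, intervalIntegral.integral_zero, add_zero] at h2
  exact (mul_eq_zero.1 h2).resolve_left (Real.exp_pos _).ne'

/-! ### The characteristic integral equation -/

/-- An exponential weight is reproduced by integration, up to the factor `1/L`. -/
lemma norm_integral_exp_le {E : Type*} [NormedAddCommGroup E] [NormedSpace ℝ E] {L c z x : ℝ}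
    (hL : 0 < L) (hc : 0 ≤ c) (hx : 0 ≤ x) {h : ℝ → E}
    (hh : ∀ t ∈ Icc 0 x, ‖h t‖ ≤ c * Real.exp (L * (t + z))) :
    ‖∫ t in (0 : ℝ)..x, h t‖ ≤ c / L * Real.exp (L * (x + z)) := by
  have h1 : ‖∫ t in (0 : ℝ)..x, h t‖ ≤ ∫ t in (0 : ℝ)..x, c * Real.exp (L * (t + z)) :=
    intervalIntegral.norm_integral_le_of_norm_le hx
      (Filter.Eventually.of_forall fun t ht => hh t ⟨ht.1.le, ht.2⟩)
      (Continuous.intervalIntegrable (by fun_prop) _ _)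
  have h2 : ∫ t in (0 : ℝ)..x, c * Real.exp (L * (t + z))
      = c / L * Real.exp (L * (x + z)) - c / L * Real.exp (L * (0 + z)) := by
    refine intervalIntegral.integral_eq_sub_of_hasDerivAt
      (f := fun t => c / L * Real.exp (L * (t + z))) (fun t _ => ?_)
      (Continuous.intervalIntegrable (by fun_prop) _ _)
    have h3 : HasDerivAt (fun t : ℝ => L * (t + z)) (L * 1) t :=
      ((hasDerivAt_id t).add_const z).const_mul L
    refine (h3.exp.const_mul (c / L)).congr_deriv ?_
    field_simp
  have h4 : 0 ≤ c / L * Real.exp (L * (0 + z)) := by positivity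
  linarith

/-- Global solvability of the characteristic (Goursat) integral equation with bounded, globally
Lipschitz right-hand sides: the solution operator is a contraction for the sup norm weighted
by `exp (-L (x + y))`, with `L` large. -/
theorem exists_goursat {E : Type*} [NormedAddCommGroup E] [NormedSpace ℝ E] [CompleteSpace E]
    (f g : ℝ × ℝ → E → E) (hf : Continuous (Function.uncurry f))
    (hg : Continuous (Function.uncurry g)) (K B : ℝ)
    (hfK : ∀ p X Y, ‖f p X - f p Y‖ ≤ K * ‖X - Y‖) (hgK : ∀ p X Y, ‖g p X - g p Y‖ ≤ K * ‖X - Y‖)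
    (hfB : ∀ p X, ‖f p X‖ ≤ B) (hgB : ∀ p X, ‖g p X‖ ≤ B) :
    ∃ Y : ℝ × ℝ → E, Continuous Y ∧ ∀ x y, 0 ≤ x → 0 ≤ y →
      Y (x, y) = (∫ t in (0 : ℝ)..y, f (x, t) (Y (x, t))) +
        ∫ t in (0 : ℝ)..x, g (t, y) (Y (t, y)) := by
  obtain ⟨L, hL0, hL⟩ : ∃ L : ℝ, 0 < L ∧ 4 * |K| ≤ L :=
    ⟨4 * |K| + 1, by positivity, by linarith⟩
  have hB : 0 ≤ B := (norm_nonneg _).trans (hfB 0 0)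
  set W : ℝ × ℝ → ℝ := fun p => Real.exp (L * ((pr p).1 + (pr p).2)) with hW
  have hprc : Continuous pr := by unfold pr; fun_prop
  have hWc : Continuous W := by rw [hW]; fun_prop
  have hW0 : ∀ p, 0 < W p := fun p => Real.exp_pos _
  -- the solution operator, with arguments retracted to the quadrant
  set T : (ℝ × ℝ → E) → ℝ × ℝ → E := fun Z p =>
    (∫ t in (0 : ℝ)..(pr p).2, f ((pr p).1, t) (Z ((pr p).1, t))) +
      ∫ t in (0 : ℝ)..(pr p).1, g (t, (pr p).2) (Z (t, (pr p).2)) with hT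
  have hTc : ∀ Z, Continuous Z → Continuous (T Z) := by
    intro Z hZ
    have h1 : Continuous fun q : (ℝ × ℝ) × ℝ => f ((pr q.1).1, q.2) (Z ((pr q.1).1, q.2)) :=
      hf.comp (by fun_prop : Continuous fun q : (ℝ × ℝ) × ℝ =>
        (((pr q.1).1, q.2), Z ((pr q.1).1, q.2)))
    have h2 : Continuous fun q : (ℝ × ℝ) × ℝ => g (q.2, (pr q.1).2) (Z (q.2, (pr q.1).2)) :=
      hg.comp (by fun_prop : Continuous fun q : (ℝ × ℝ) × ℝ =>
        ((q.2, (pr q.1).2), Z (q.2, (pr q.1).2)))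
    exact (intervalIntegral.continuous_parametric_intervalIntegral_of_continuous
        (f := fun (p : ℝ × ℝ) t => f ((pr p).1, t) (Z ((pr p).1, t))) h1
        (continuous_snd.comp hprc)).add
      (intervalIntegral.continuous_parametric_intervalIntegral_of_continuous
        (f := fun (p : ℝ × ℝ) t => g (t, (pr p).2) (Z (t, (pr p).2))) h2
        (continuous_fst.comp hprc))
  -- both kinds of estimate follow from the same weighted bound
  have hest : ∀ (F G : ℝ × ℝ → E) (c : ℝ), 0 ≤ c → (∀ q ∈ QQ, ‖F q‖ ≤ c * W q) →
      (∀ q ∈ QQ, ‖G q‖ ≤ c * W q) → ∀ p : ℝ × ℝ,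
      ‖(∫ t in (0 : ℝ)..(pr p).2, F ((pr p).1, t)) + ∫ t in (0 : ℝ)..(pr p).1, G (t, (pr p).2)‖
        ≤ 2 * c / L * W p := by
    intro F G c hc hF hG p
    have hp := pr_mem p
    have h1 := norm_integral_exp_le (z := (pr p).1) hL0 hc hp.2
      (h := fun t => F ((pr p).1, t)) (fun t ht => by
        have hq := mem_QQ hp.1 ht.1
        have := hF _ hq
        simp only [hW, pr_eq hq] at this
        rwa [add_comm t])
    have h2 := norm_integral_exp_le (z := (pr p).2) hL0 hc hp.1
      (h := fun t => G (t, (pr p).2)) (fun t ht => by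
        have hq := mem_QQ ht.1 hp.2
        have := hG _ hq
        simpa only [hW, pr_eq hq] using this)
    rw [add_comm (pr p).2] at h1
    refine (norm_add_le _ _).trans ((add_le_add h1 h2).trans (le_of_eq ?_))
    simp only [hW]; ring
  have hWinv : ∀ p (c : ℝ) (e : E), ‖e‖ ≤ c * W p → ‖(W p)⁻¹ • e‖ ≤ c := by
    intro p c e he
    rw [norm_smul, Real.norm_of_nonneg (inv_nonneg.2 (hW0 p).le), inv_mul_le_iff₀ (hW0 p)]
    linarith
  have hW1 : ∀ p, 1 ≤ W p := by
    intro p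
    have hp := pr_mem p
    exact Real.one_le_exp (mul_nonneg hL0.le (add_nonneg hp.1 hp.2))
  -- the conjugated operator on bounded continuous functions
  set Φ : BoundedContinuousFunction (ℝ × ℝ) E → BoundedContinuousFunction (ℝ × ℝ) E := fun U =>
    BoundedContinuousFunction.ofNormedAddCommGroup
      (fun p => (W p)⁻¹ • T (fun q => W q • U q) p)
      ((hWc.inv₀ (fun p => (hW0 p).ne')).smul (hTc _ (hWc.smul U.continuous)))
      (2 * B / L) (fun p => hWinv p _ _ (hest (fun q => f q (W q • U q))
        (fun q => g q (W q • U q)) B hB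
        (fun q _ => (hfB _ _).trans (le_mul_of_one_le_right hB (hW1 q)))
        (fun q _ => (hgB _ _).trans (le_mul_of_one_le_right hB (hW1 q))) p)) with hΦ
  have hcontr : ContractingWith (1 / 2) Φ := by
    refine ⟨by norm_num, LipschitzWith.of_dist_le_mul fun U V => ?_⟩
    rw [BoundedContinuousFunction.dist_le (by positivity)]
    intro p
    rw [dist_eq_norm]
    set c := |K| * dist U V with hc
    have hc0 : 0 ≤ c := by positivity
    have hWUV : ∀ q, ‖W q • U q - W q • V q‖ ≤ dist U V * W q := by
      intro q
      rw [← smul_sub, norm_smul, Real.norm_of_nonneg (hW0 q).le, mul_comm, ← dist_eq_norm]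
      exact mul_le_mul_of_nonneg_right (BoundedContinuousFunction.dist_coe_le_dist q) (hW0 q).le
    have hb : ∀ (F : ℝ × ℝ → E → E), (∀ p X Y, ‖F p X - F p Y‖ ≤ K * ‖X - Y‖) → ∀ q,
        ‖F q (W q • U q) - F q (W q • V q)‖ ≤ c * W q := by
      intro F hF q
      calc _ ≤ K * ‖W q • U q - W q • V q‖ := hF _ _ _
        _ ≤ |K| * ‖W q • U q - W q • V q‖ :=
          mul_le_mul_of_nonneg_right (le_abs_self K) (norm_nonneg _)
        _ ≤ |K| * (dist U V * W q) := mul_le_mul_of_nonneg_left (hWUV q) (abs_nonneg K)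
        _ = c * W q := by rw [hc]; ring
    have hint : ∀ (F : ℝ × ℝ → E → E), Continuous (Function.uncurry F) →
        ∀ (U : BoundedContinuousFunction (ℝ × ℝ) E) (k : ℝ → ℝ × ℝ), Continuous k → ∀ a b : ℝ,
        IntervalIntegrable (fun t => F (k t) (W (k t) • U (k t))) MeasureTheory.volume a b := by
      intro F hF U k hk a b
      refine Continuous.intervalIntegrable ?_ _ _
      exact hF.comp (hk.prodMk ((hWc.comp hk).smul (U.continuous.comp hk)))
    have hdiff : T (fun q => W q • U q) p - T (fun q => W q • V q) p =
        (∫ t in (0 : ℝ)..(pr p).2, (fun q => f q (W q • U q) - f q (W q • V q)) ((pr p).1, t)) +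
        ∫ t in (0 : ℝ)..(pr p).1,
          (fun q => g q (W q • U q) - g q (W q • V q)) (t, (pr p).2) := by
      simp only [hT]
      rw [intervalIntegral.integral_sub
          (hint f hf U (fun t => ((pr p).1, t)) (by fun_prop) _ _)
          (hint f hf V (fun t => ((pr p).1, t)) (by fun_prop) _ _),
        intervalIntegral.integral_sub
          (hint g hg U (fun t => (t, (pr p).2)) (by fun_prop) _ _)
          (hint g hg V (fun t => (t, (pr p).2)) (by fun_prop) _ _)]
      abel
    have hfin := hest _ _ c hc0 (fun q _ => hb f hfK q) (fun q _ => hb g hgK q) p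
    rw [← hdiff] at hfin
    have h2 := hWinv p _ _ hfin
    rw [smul_sub] at h2
    refine h2.trans ?_
    rw [div_le_iff₀ hL0, hc]
    have : 4 * |K| * dist U V ≤ L * dist U V := mul_le_mul_of_nonneg_right hL dist_nonneg
    simp only [NNReal.coe_div, NNReal.coe_one, NNReal.coe_ofNat]
    linarith
  obtain ⟨U, hU⟩ : ∃ U, Φ U = U := ⟨_, hcontr.fixedPoint_isFixedPt⟩
  refine ⟨fun q => W q • U q, hWc.smul U.continuous, fun x y hx hy => ?_⟩
  have h1 : U (x, y) = (W (x, y))⁻¹ • T (fun q => W q • U q) (x, y) := by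
    conv_lhs => rw [← hU]
    rfl
  have h2 : W (x, y) • U (x, y) = T (fun q => W q • U q) (x, y) := by
    rw [h1, smul_inv_smul₀ (hW0 _).ne']
  refine h2.trans ?_
  simp only [hT, pr_eq (mem_QQ hx hy)]

/-! ### Bounded Lipschitz coefficients and integral bounds -/

/-- A coefficient `f p X` that is jointly continuous, bounded, and Lipschitz in the unknown `X`,
uniformly in the point `p`. -/
structure BL {E : Type*} [NormedAddCommGroup E] (f : ℝ × ℝ → E → ℝ) : Prop where
  cont : Continuous (Function.uncurry f)
  bdd : ∃ K B : ℝ, 0 ≤ K ∧ 0 ≤ B ∧ ∀ p X Y, |f p X - f p Y| ≤ K * ‖X - Y‖ ∧ |f p X| ≤ B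

section BL

variable {E : Type*} [NormedAddCommGroup E] {f g : ℝ × ℝ → E → ℝ}

lemma BL.const (c : ℝ) : BL (fun (_ : ℝ × ℝ) (_ : E) => c) :=
  ⟨continuous_const, 0, |c|, le_rfl, abs_nonneg c, fun p X Y => by simp⟩

lemma BL.sub (hf : BL f) (hg : BL g) : BL (fun p X => f p X - g p X) := by
  obtain ⟨cf, K, B, hK, hB, h⟩ := hf
  obtain ⟨cg, K', B', hK', hB', h'⟩ := hg
  refine ⟨cf.sub cg, K + K', B + B', by positivity, by positivity, fun p X Y => ⟨?_, ?_⟩⟩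
  · have h1 := (h p X Y).1
    have h2 := (h' p X Y).1
    rw [abs_le] at *
    constructor <;> linarith
  · have h1 := (h p X Y).2
    have h2 := (h' p X Y).2
    rw [abs_le] at *
    constructor <;> linarith

lemma BL.mul (hf : BL f) (hg : BL g) : BL (fun p X => f p X * g p X) := by
  obtain ⟨cf, K, B, hK, hB, h⟩ := hf
  obtain ⟨cg, K', B', hK', hB', h'⟩ := hg
  refine ⟨cf.mul cg, K * B' + B * K', B * B', by positivity, by positivity, fun p X Y => ⟨?_, ?_⟩⟩
  · have e : f p X * g p X - f p Y * g p Y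
        = (f p X - f p Y) * g p X + f p Y * (g p X - g p Y) := by ring
    rw [e]
    refine (abs_add_le _ _).trans ?_
    rw [abs_mul, abs_mul]
    have h1 : |f p X - f p Y| * |g p X| ≤ K * ‖X - Y‖ * B' :=
      mul_le_mul (h p X Y).1 (h' p X Y).2 (abs_nonneg _) (by positivity)
    have h2 : |f p Y| * |g p X - g p Y| ≤ B * (K' * ‖X - Y‖) :=
      mul_le_mul (h p Y Y).2 (h' p X Y).1 (abs_nonneg _) (by positivity)
    linarith
  · rw [abs_mul]
    exact mul_le_mul (h p X X).2 (h' p X X).2 (abs_nonneg _) hB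

lemma BL.inv_of_lipschitz {K c : ℝ} (cf : Continuous (Function.uncurry f)) (hK : 0 ≤ K)
    (h : ∀ p X Y, |f p X - f p Y| ≤ K * ‖X - Y‖) (hc : 0 < c) (hfc : ∀ p X, c ≤ f p X) :
    BL (fun p X => (f p X)⁻¹) := by
  refine ⟨cf.inv₀ fun q => (hc.trans_le (hfc q.1 q.2)).ne', K / c ^ 2, c⁻¹, by positivity,
    by positivity, fun p X Y => ⟨?_, ?_⟩⟩
  · have hX := hc.trans_le (hfc p X)
    have hY := hc.trans_le (hfc p Y)
    have e : (f p X)⁻¹ - (f p Y)⁻¹ = (f p Y - f p X) / (f p X * f p Y) := by field_simp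
    rw [e, abs_div, abs_sub_comm, abs_of_pos (mul_pos hX hY), div_le_iff₀ (mul_pos hX hY)]
    have h2 : c ^ 2 ≤ f p X * f p Y := by
      rw [sq]; exact mul_le_mul (hfc p X) (hfc p Y) hc.le hX.le
    calc _ ≤ K * ‖X - Y‖ := h p X Y
      _ = K / c ^ 2 * ‖X - Y‖ * c ^ 2 := by field_simp
      _ ≤ _ := mul_le_mul_of_nonneg_left h2 (by positivity)
  · rw [abs_inv, abs_of_pos (hc.trans_le (hfc p X))]
    exact inv_anti₀ hc (hfc p X)

lemma BL.inv (hf : BL f) {c : ℝ} (hc : 0 < c) (hfc : ∀ p X, c ≤ f p X) :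
    BL (fun p X => (f p X)⁻¹) := by
  obtain ⟨cf, K, B, hK, hB, h⟩ := hf
  exact BL.inv_of_lipschitz cf hK (fun p X Y => (h p X Y).1) hc hfc

/-- Truncation of `A + ℓ X` to the interval `[lo, hi]`, for a coordinate function `ℓ`. -/
lemma BL.clamp {lo hi A : ℝ × ℝ → ℝ} {ℓ : E → ℝ} (hlo : Continuous lo) (hhi : Continuous hi)
    (hA : Continuous A) (hℓ : Continuous ℓ) (hℓ' : ∀ X Y, |ℓ X - ℓ Y| ≤ ‖X - Y‖) {B : ℝ}
    (hloB : ∀ p, |lo p| ≤ B) (hhiB : ∀ p, |hi p| ≤ B) (hle : ∀ p, lo p ≤ hi p) :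
    BL (fun p X => max (lo p) (min (hi p) (A p + ℓ X))) := by
  refine ⟨by fun_prop, 1, B, zero_le_one, (abs_nonneg _).trans (hloB 0), fun p X Y => ⟨?_, ?_⟩⟩
  · refine (abs_max_sub_max_le_max _ _ _ _).trans ?_
    refine max_le (by simp) ((abs_min_sub_min_le_max _ _ _ _).trans ?_)
    refine max_le (by simp) ?_
    rw [one_mul, add_sub_add_left_eq_sub]
    exact hℓ' X Y
  · have h1 := abs_le.1 (hloB p)
    have h2 := abs_le.1 (hhiB p)
    rw [abs_le]
    exact ⟨h1.1.trans (le_max_left _ _),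
      (max_le (hle p) (min_le_left _ _)).trans h2.2⟩

end BL

/-- A bound by an inverse square integrates to a bound by the inverse. -/
lemma abs_integral_le_sq {a c y : ℝ} (ha : 0 < a) (hc : 0 ≤ c) (hy : 0 ≤ y) {h : ℝ → ℝ}
    (hh : ∀ t ∈ Icc 0 y, |h t| ≤ c / (a + t) ^ 2) : |∫ t in (0 : ℝ)..y, h t| ≤ c / a := by
  have hpos : ∀ t ∈ uIcc 0 y, 0 < a + t := fun t ht => by
    rw [uIcc_of_le hy] at ht; linarith [ht.1]
  have hi : IntervalIntegrable (fun t => c / (a + t) ^ 2) MeasureTheory.volume 0 y := by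
    apply ContinuousOn.intervalIntegrable
    exact continuousOn_const.div (by fun_prop) fun t ht => pow_ne_zero 2 (hpos t ht).ne'
  have h1 := intervalIntegral.norm_integral_le_of_norm_le hy (f := h)
      (Filter.Eventually.of_forall fun t ht => hh t ⟨ht.1.le, ht.2⟩) hi
  have h2 : ∫ t in (0 : ℝ)..y, c / (a + t) ^ 2 = -(c / (a + y)) - -(c / (a + 0)) := by
    refine intervalIntegral.integral_eq_sub_of_hasDerivAt (f := fun t => -(c / (a + t)))
      (fun t ht => ?_) hi
    have h3 := ((hasDerivAt_const t c).fun_div ((hasDerivAt_id' t).const_add a)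
      (hpos t ht).ne').fun_neg
    refine h3.congr_deriv ?_
    ring
  have h4 : 0 ≤ c / (a + y) := by positivity
  rw [Real.norm_eq_abs] at h1
  rw [add_zero] at h2
  linarith

/-- A bound by an inverse cube integrates to half the bound by the inverse square. -/
lemma abs_integral_le_cube {a c y : ℝ} (ha : 0 < a) (hc : 0 ≤ c) (hy : 0 ≤ y) {h : ℝ → ℝ}
    (hh : ∀ t ∈ Icc 0 y, |h t| ≤ c / (a + t) ^ 3) :
    |∫ t in (0 : ℝ)..y, h t| ≤ c / 2 / a ^ 2 := by
  have hpos : ∀ t ∈ uIcc 0 y, 0 < a + t := fun t ht => by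
    rw [uIcc_of_le hy] at ht; linarith [ht.1]
  have hi : IntervalIntegrable (fun t => c / (a + t) ^ 3) MeasureTheory.volume 0 y := by
    apply ContinuousOn.intervalIntegrable
    exact continuousOn_const.div (by fun_prop) fun t ht => pow_ne_zero 3 (hpos t ht).ne'
  have h1 := intervalIntegral.norm_integral_le_of_norm_le hy (f := h)
      (Filter.Eventually.of_forall fun t ht => hh t ⟨ht.1.le, ht.2⟩) hi
  have h2 : ∫ t in (0 : ℝ)..y, c / (a + t) ^ 3
      = -(c / 2 / (a + y) ^ 2) - -(c / 2 / (a + 0) ^ 2) := by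
    refine intervalIntegral.integral_eq_sub_of_hasDerivAt (f := fun t => -(c / 2 / (a + t) ^ 2))
      (fun t ht => ?_) hi
    have h3 := ((hasDerivAt_const t (c / 2)).fun_div (((hasDerivAt_id' t).const_add a).fun_pow 2)
      (pow_ne_zero 2 (hpos t ht).ne')).fun_neg
    refine h3.congr_deriv ?_
    have := (hpos t ht).ne'
    field_simp
    ring
  have h4 : 0 ≤ c / 2 / (a + y) ^ 2 := by positivity
  rw [Real.norm_eq_abs] at h1
  rw [add_zero] at h2
  linarith

/-- The common value `∂ₓ λ = ∂_y σ` dictated by the field equations, `σ = ∂ₓ r`, `λ = ∂_y r`. -/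
noncomputable def Nf (σ lam m r : ℝ × ℝ → ℝ) : ℝ × ℝ → ℝ :=
  fun q => 2 * m q * σ q * lam q / (r q * (r q - 2 * m q))

/-- The right-hand side of the mass equation along `x`: for `p = ∂ₓ ψ` and `ψ = r φ`, the
quantity `p - σ ψ / r` is `r ∂ₓ φ`. -/
noncomputable def Hf (σ p m ψ r : ℝ × ℝ → ℝ) : ℝ × ℝ → ℝ :=
  fun q => (r q - 2 * m q) * (p q - σ q * ψ q / r q) ^ 2 / (2 * r q * σ q)

/-! ### The reduced system and its a priori bounds -/

/-- A truncation of `A + X i` to the interval `[lo, hi]`, described only by the properties used. -/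
lemma exists_clamp {n : ℕ} (i : Fin n) {lo hi A : ℝ × ℝ → ℝ} (hlo : Continuous lo)
    (hhi : Continuous hi) (hA : Continuous A) {B : ℝ} (hloB : ∀ p, |lo p| ≤ B)
    (hhiB : ∀ p, |hi p| ≤ B) (hle : ∀ p, lo p ≤ hi p) :
    ∃ f : ℝ × ℝ → (Fin n → ℝ) → ℝ, BL f ∧ (∀ p X, lo p ≤ f p X) ∧ (∀ p X, f p X ≤ hi p) ∧
      ∀ p X, lo p ≤ A p + X i → A p + X i ≤ hi p → f p X = A p + X i :=
  ⟨_, BL.clamp (ℓ := fun X => X i) hlo hhi hA (continuous_apply i)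
    (fun X Y => norm_le_pi_norm (X - Y) i) hloB hhiB hle, fun p X => le_max_left _ _,
    fun p X => max_le (hle p) (min_le_left _ _),
    fun p X h1 h2 => by rw [min_eq_right h2, max_eq_right h1]⟩

/-- The inverse of `A + X i` truncated from below by `lo`, with `lo` uniformly positive. -/
lemma exists_clamp_inv {n : ℕ} (i : Fin n) {lo A : ℝ × ℝ → ℝ} (hlo : Continuous lo)
    (hA : Continuous A) {c : ℝ} (hc : 0 < c) (hcl : ∀ p, c ≤ lo p) :
    ∃ f : ℝ × ℝ → (Fin n → ℝ) → ℝ, BL f ∧ (∀ p X, 0 < f p X) ∧ (∀ p X, f p X ≤ (lo p)⁻¹) ∧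
      ∀ p X, lo p ≤ A p + X i → f p X = (A p + X i)⁻¹ := by
  have hp : ∀ p (X : Fin n → ℝ), c ≤ max (lo p) (A p + X i) :=
    fun p X => (hcl p).trans (le_max_left _ _)
  refine ⟨fun p X => (max (lo p) (A p + X i))⁻¹, ?_, fun p X => inv_pos.2 (hc.trans_le (hp p X)),
    fun p X => inv_anti₀ (hc.trans_le (hcl p)) (le_max_left _ _),
    fun p X h1 => by simp only [max_eq_right h1]⟩
  refine BL.inv_of_lipschitz (K := 1) (by unfold Function.uncurry; fun_prop) zero_le_one
    (fun p X Y => ?_) hc hp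
  refine (abs_max_sub_max_le_max _ _ _ _).trans (max_le (by simp) ?_)
  rw [one_mul, add_sub_add_left_eq_sub]
  exact norm_le_pi_norm (X - Y) i

/-- `exists_goursat` for systems written in components. -/
lemma exists_goursat_components {n : ℕ} (F G : Fin n → ℝ × ℝ → (Fin n → ℝ) → ℝ)
    (hF : ∀ i, BL (F i)) (hG : ∀ i, BL (G i)) :
    ∃ Y : ℝ × ℝ → Fin n → ℝ, Continuous Y ∧ ∀ i, ∀ q ∈ QQ,
      Y q i = intY (fun q => F i q (Y q)) q + intX (fun q => G i q (Y q)) q := by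
  have cF := fun i => (hF i).cont
  have cG := fun i => (hG i).cont
  choose K B hK hB h using fun i => (hF i).bdd
  choose K' B' hK' hB' h' using fun i => (hG i).bdd
  set k := ∑ i, (K i + K' i) with hk
  set b := ∑ i, (B i + B' i) with hb
  have hki : ∀ i, K i + K' i ≤ k := fun i =>
    Finset.single_le_sum (f := fun i => K i + K' i)
      (fun j _ => add_nonneg (hK j) (hK' j)) (Finset.mem_univ i)
  have hbi : ∀ i, B i + B' i ≤ b := fun i =>
    Finset.single_le_sum (f := fun i => B i + B' i)
      (fun j _ => add_nonneg (hB j) (hB' j)) (Finset.mem_univ i)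
  have hk0 : 0 ≤ k := Finset.sum_nonneg fun j _ => add_nonneg (hK j) (hK' j)
  have hb0 : 0 ≤ b := Finset.sum_nonneg fun j _ => add_nonneg (hB j) (hB' j)
  have cF' : Continuous (Function.uncurry fun p X i => F i p X) := continuous_pi fun i => cF i
  have cG' : Continuous (Function.uncurry fun p X i => G i p X) := continuous_pi fun i => cG i
  obtain ⟨Y, hY, hYe⟩ := exists_goursat (fun p X i => F i p X) (fun p X i => G i p X) cF' cG' k b
    (fun p X Y => (pi_norm_le_iff_of_nonneg (by positivity)).2 fun i =>
      ((h i p X Y).1.trans (mul_le_mul_of_nonneg_right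
        (by linarith [hki i, hK' i]) (norm_nonneg _))))
    (fun p X Y => (pi_norm_le_iff_of_nonneg (by positivity)).2 fun i =>
      ((h' i p X Y).1.trans (mul_le_mul_of_nonneg_right
        (by linarith [hki i, hK i]) (norm_nonneg _))))
    (fun p X => (pi_norm_le_iff_of_nonneg hb0).2 fun i =>
      (h i p X X).2.trans (by linarith [hbi i, hB' i]))
    (fun p X => (pi_norm_le_iff_of_nonneg hb0).2 fun i =>
      (h' i p X X).2.trans (by linarith [hbi i, hB i]))
  refine ⟨Y, hY, fun i q hq => ?_⟩
  have e := congrFun (hYe q.1 q.2 hq.1 hq.2) i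
  have c1 : Continuous fun t => fun i => F i (q.1, t) (Y (q.1, t)) :=
    cF'.comp (by fun_prop : Continuous fun t => ((q.1, t), Y (q.1, t)))
  have c2 : Continuous fun t => fun i => G i (t, q.2) (Y (t, q.2)) :=
    cG'.comp (by fun_prop : Continuous fun t => ((t, q.2), Y (t, q.2)))
  have p1 := (ContinuousLinearMap.proj (R := ℝ) (φ := fun _ : Fin n => ℝ) i).intervalIntegral_comp_comm
    (c1.intervalIntegrable (μ := MeasureTheory.volume) 0 q.2)
  have p2 := (ContinuousLinearMap.proj (R := ℝ) (φ := fun _ : Fin n => ℝ) i).intervalIntegral_comp_comm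
    (c2.intervalIntegrable (μ := MeasureTheory.volume) 0 q.1)
  rw [Pi.add_apply] at e
  exact e.trans (congrArg₂ (· + ·) p1.symm p2.symm)

lemma BL.cont_comp {n : ℕ} {f : ℝ × ℝ → (Fin n → ℝ) → ℝ} (hf : BL f) {Y : ℝ × ℝ → Fin n → ℝ}
    (hY : Continuous Y) : ContinuousOn (fun q => f q (Y q)) QQ :=
  (hf.cont.comp (continuous_id.prodMk hY)).continuousOn

/-- Global solution of the reduced first-order system for `σ = ∂ₓ r`, `λ = ∂_y r`, `p = ∂ₓ ψ`,
`m`, `ψ = r φ` and `r` on the quadrant, together with the a priori bounds. The largeness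
assumptions on `R` make each truncation of the unknowns inactive. -/
theorem exists_core {R M C α : ℝ} (hR : 0 < R) (hM : 0 < M) (hC : 0 < C) (hα : 1 < α)
    (h1 : 16 * α * M ≤ R) (h2 : 1 + 8 * α ^ 2 * M ≤ (α - 1) * R)
    (h3 : 6 * α ^ 2 * C ^ 2 ≤ (α - 1) * M * R) {p₀ m₁ ψ₁ : ℝ → ℝ}
    (cp₀ : ContinuousOn p₀ (Ici 0)) (cm₁ : ContinuousOn m₁ (Ici 0))
    (cψ₁ : ContinuousOn ψ₁ (Ici 0)) (bp₀ : ∀ x, 0 ≤ x → |p₀ x| ≤ C / (R + x) ^ 2)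
    (bm₁ : ∀ y, 0 ≤ y → 0 ≤ m₁ y ∧ m₁ y ≤ M) (bψ₁ : ∀ y, 0 ≤ y → |ψ₁ y| ≤ C) :
    ∃ σ lam p m ψ r : ℝ × ℝ → ℝ,
      (∀ q ∈ QQ, 0 < σ q ∧ 0 < lam q ∧ 0 < r q ∧ 0 < r q - 2 * m q) ∧
      PY σ (Nf σ lam m r) ∧ PX lam (Nf σ lam m r) ∧
      PY p (fun q => Nf σ lam m r q * ψ q / r q) ∧ PX ψ p ∧ PX r σ ∧ PX m (Hf σ p m ψ r) ∧
      (∀ x, 0 ≤ x → σ (x, 0) = 1 ∧ p (x, 0) = p₀ x) ∧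
      (∀ y, 0 ≤ y → lam (0, y) = 1 ∧ m (0, y) = m₁ y ∧ ψ (0, y) = ψ₁ y ∧ r (0, y) = R + y) := by
  set b := (1 + 8 * α ^ 2 * M) * C with hb
  have hb0 : 0 < b := by positivity
  have hα0 : 0 < α := by linarith
  have cpr1 : Continuous fun q => (pr q).1 := by unfold pr; fun_prop
  have cpr2 : Continuous fun q => (pr q).2 := by unfold pr; fun_prop
  have n1 : ∀ q, 0 ≤ (pr q).1 := fun q => (pr_mem q).1
  have n2 : ∀ q, 0 ≤ (pr q).2 := fun q => (pr_mem q).2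
  have cbx : Continuous fun q => b / (R + (pr q).1) ^ 2 :=
    continuous_const.div (by fun_prop) fun q => by have := n1 q; positivity
  have bx : ∀ q, |b / (R + (pr q).1) ^ 2| ≤ b / R ^ 2 := fun q => by
    have := n1 q
    rw [abs_of_nonneg (by positivity)]
    gcongr
    linarith
  -- the truncated unknowns
  obtain ⟨sg, Lsg, sg1, sg2, sgid⟩ := exists_clamp (n := 6) 0 (lo := fun _ => 1)
    (hi := fun _ => 2) (A := fun _ => 1) continuous_const continuous_const continuous_const
    (B := 2) (by norm_num) (by norm_num) (by norm_num)
  obtain ⟨pp, Lpp, pp1, pp2, ppid⟩ := exists_clamp (n := 6) 1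
    (lo := fun q => -(b / (R + (pr q).1) ^ 2)) (hi := fun q => b / (R + (pr q).1) ^ 2)
    (A := fun q => p₀ (pr q).1) cbx.neg cbx (cp₀.comp_continuous cpr1 n1)
    (B := b / R ^ 2) (fun q => by rw [abs_neg]; exact bx q) bx
    (fun q => by have := n1 q; have : 0 ≤ b / (R + (pr q).1) ^ 2 := by positivity
                 linarith)
  obtain ⟨la, Lla, la1, la2, laid⟩ := exists_clamp (n := 6) 2 (lo := fun _ => 1)
    (hi := fun _ => 2) (A := fun _ => 1) continuous_const continuous_const continuous_const
    (B := 2) (by norm_num) (by norm_num) (by norm_num)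
  obtain ⟨mm, Lmm, mm1, mm2, mmid⟩ := exists_clamp (n := 6) 3 (lo := fun _ => 0)
    (hi := fun _ => α * M) (A := fun q => m₁ (pr q).2) continuous_const continuous_const
    (cm₁.comp_continuous cpr2 n2) (B := α * M) (fun _ => by simp; positivity)
    (fun _ => (abs_of_pos (by positivity)).le) (fun _ => by positivity)
  obtain ⟨ps, Lps, ps1, ps2, psid⟩ := exists_clamp (n := 6) 4 (lo := fun _ => -(α * C))
    (hi := fun _ => α * C) (A := fun q => ψ₁ (pr q).2) continuous_const continuous_const
    (cψ₁.comp_continuous cpr2 n2) (B := α * C)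
    (fun _ => by rw [abs_neg, abs_of_pos (by positivity)])
    (fun _ => (abs_of_pos (by positivity)).le) (fun _ => by
      have : 0 < α * C := by positivity
      linarith)
  obtain ⟨w, Lw, w0, w1, wid⟩ := exists_clamp_inv (n := 6) 5
    (lo := fun q => R + (pr q).1 + (pr q).2) (A := fun q => R + (pr q).2)
    (by fun_prop) (by fun_prop) hR (fun q => by linarith [n1 q, n2 q])
  have wR : ∀ q X, w q X ≤ R⁻¹ := fun q X => (w1 q X).trans
    (inv_anti₀ hR (by linarith [n1 q, n2 q]))
  have hmw : ∀ q X, 1 / 2 ≤ 1 - 2 * mm q X * w q X := fun q X => by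
    have : mm q X * w q X ≤ α * M * R⁻¹ :=
      mul_le_mul (mm2 q X) (wR q X) (w0 q X).le (by positivity)
    have h4 : α * M * R⁻¹ ≤ 1 / 16 := by
      rw [← div_eq_mul_inv, div_le_iff₀ hR]; linarith
    linarith
  have L1 : BL fun q X => 1 - 2 * mm q X * w q X :=
    (BL.const 1).sub (((BL.const 2).mul Lmm).mul Lw)
  have Ld := L1.inv (by norm_num) hmw
  set N : ℝ × ℝ → (Fin 6 → ℝ) → ℝ := fun q X =>
    2 * mm q X * sg q X * la q X * (w q X * w q X) * (1 - 2 * mm q X * w q X)⁻¹ with hN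
  have LN : BL N := (((((BL.const 2).mul Lmm).mul Lsg).mul Lla).mul (Lw.mul Lw)).mul Ld
  set F1 : ℝ × ℝ → (Fin 6 → ℝ) → ℝ := fun q X => N q X * ps q X * w q X with hF1
  have LF1 : BL F1 := (LN.mul Lps).mul Lw
  set Z : ℝ × ℝ → (Fin 6 → ℝ) → ℝ := fun q X => pp q X - sg q X * ps q X * w q X with hZ
  have LZ : BL Z := Lpp.sub ((Lsg.mul Lps).mul Lw)
  set H : ℝ × ℝ → (Fin 6 → ℝ) → ℝ := fun q X =>
    1 / 2 * (1 - 2 * mm q X * w q X) * (Z q X * Z q X) * (sg q X)⁻¹ with hH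
  have LH : BL H := (((BL.const (1 / 2)).mul L1).mul (LZ.mul LZ)).mul (Lsg.inv one_pos sg1)
  have L0 : BL fun (_ : ℝ × ℝ) (_ : Fin 6 → ℝ) => (0 : ℝ) := BL.const 0
  obtain ⟨Y, cY, hY⟩ := exists_goursat_components
    ![N, F1, fun _ _ => 0, fun _ _ => 0, fun _ _ => 0, fun _ _ => 0]
    ![fun _ _ => 0, fun _ _ => 0, N, H, pp, sg]
    (by intro i; fin_cases i <;> simp <;> assumption)
    (by intro i; fin_cases i <;> simp <;> assumption)
  have iX0 : ∀ q, intX (fun _ => 0) q = 0 := fun q => by simp [intX]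
  have iY0 : ∀ q, intY (fun _ => 0) q = 0 := fun q => by simp [intY]
  have y0 : ∀ q ∈ QQ, Y q 0 = intY (fun q => N q (Y q)) q := fun q hq => by
    simpa [iX0, iY0] using hY 0 q hq
  have y1 : ∀ q ∈ QQ, Y q 1 = intY (fun q => F1 q (Y q)) q := fun q hq => by
    simpa [iX0, iY0] using hY 1 q hq
  have y2 : ∀ q ∈ QQ, Y q 2 = intX (fun q => N q (Y q)) q := fun q hq => by
    simpa [iX0, iY0] using hY 2 q hq
  have y3 : ∀ q ∈ QQ, Y q 3 = intX (fun q => H q (Y q)) q := fun q hq => by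
    simpa [iX0, iY0] using hY 3 q hq
  have y4 : ∀ q ∈ QQ, Y q 4 = intX (fun q => pp q (Y q)) q := fun q hq => by
    simpa [iX0, iY0] using hY 4 q hq
  have y5 : ∀ q ∈ QQ, Y q 5 = intX (fun q => sg q (Y q)) q := fun q hq => by
    simpa [iX0, iY0] using hY 5 q hq
  -- bounds on the truncated coefficients
  have wρ : ∀ q ∈ QQ, ∀ X, w q X ≤ (R + q.1 + q.2)⁻¹ := fun q hq X => by
    simpa only [pr_eq hq] using w1 q X
  have bN : ∀ q ∈ QQ, ∀ X, 0 ≤ N q X ∧ N q X ≤ 16 * α * M / (R + q.1 + q.2) ^ 2 :=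
    fun q hq X => by
      have a0 := mm1 q X
      have a1 := mm2 q X
      have a2 := sg1 q X
      have a3 := sg2 q X
      have a4 := la1 q X
      have a5 := la2 q X
      have a6 := (w0 q X).le
      have a7 := wρ q hq X
      have a8 : (1 - 2 * mm q X * w q X)⁻¹ ≤ 2 := by
        have := inv_anti₀ (by norm_num) (hmw q X)
        norm_num at this ⊢
        exact this
      have a9 : 0 ≤ (1 - 2 * mm q X * w q X)⁻¹ := inv_nonneg.2 (by linarith [hmw q X])
      have s0 : 0 ≤ sg q X := by linarith
      have l0 : 0 ≤ la q X := by linarith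
      have ρ0 : 0 < R + q.1 + q.2 := by have := hq.1; have := hq.2; simp only [mem_Ici] at *; linarith
      refine ⟨by positivity, ?_⟩
      calc N q X ≤ 2 * (α * M) * 2 * 2 * ((R + q.1 + q.2)⁻¹ * (R + q.1 + q.2)⁻¹) * 2 := by
            have e1 : 2 * mm q X * sg q X * la q X ≤ 2 * (α * M) * 2 * 2 := by gcongr
            have e2 : w q X * w q X ≤ (R + q.1 + q.2)⁻¹ * (R + q.1 + q.2)⁻¹ := by gcongr
            exact mul_le_mul (mul_le_mul e1 e2 (by positivity) (by positivity)) a8 a9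
              (by positivity)
        _ = _ := by field_simp; ring
  have abN : ∀ q ∈ QQ, ∀ X, |N q X| ≤ 16 * α * M / (R + q.1 + q.2) ^ 2 := fun q hq X => by
    rw [abs_of_nonneg (bN q hq X).1]; exact (bN q hq X).2
  have abF : ∀ q ∈ QQ, ∀ X, |F1 q X| ≤ 16 * α ^ 2 * M * C / (R + q.1 + q.2) ^ 3 :=
    fun q hq X => by
      have ρ0 : 0 < R + q.1 + q.2 := by have := hq.1; have := hq.2; simp only [mem_Ici] at *; linarith
      have e1 : |ps q X| ≤ α * C := abs_le.2 ⟨ps1 q X, ps2 q X⟩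
      simp only [hF1]
      rw [abs_mul, abs_mul, abs_of_pos (w0 q X)]
      calc _ ≤ 16 * α * M / (R + q.1 + q.2) ^ 2 * (α * C) * (R + q.1 + q.2)⁻¹ := by
            have := abN q hq X
            have := wρ q hq X
            have := (w0 q X).le
            gcongr
        _ = _ := by field_simp
  have hσ : ∀ q ∈ QQ, 0 ≤ Y q 0 ∧ Y q 0 ≤ 1 := fun q hq => by
    have hq1 : 0 ≤ q.1 := hq.1
    have hq2 : 0 ≤ q.2 := hq.2
    rw [y0 q hq]
    refine ⟨intervalIntegral.integral_nonneg hq2 fun t ht => (bN _ (mem_QQ hq1 ht.1) _).1, ?_⟩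
    refine (le_abs_self _).trans ((abs_integral_le_sq (a := R + q.1) (c := 16 * α * M)
      (by linarith) (by positivity) hq2 fun t ht => abN _ (mem_QQ hq1 ht.1) _).trans ?_)
    rw [div_le_one (by linarith)]; linarith
  have hlm : ∀ q ∈ QQ, 0 ≤ Y q 2 ∧ Y q 2 ≤ 1 := fun q hq => by
    have hq1 : 0 ≤ q.1 := hq.1
    have hq2 : 0 ≤ q.2 := hq.2
    rw [y2 q hq]
    refine ⟨intervalIntegral.integral_nonneg hq1 fun t ht => (bN _ (mem_QQ ht.1 hq2) _).1, ?_⟩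
    refine (le_abs_self _).trans ((abs_integral_le_sq (a := R + q.2) (c := 16 * α * M)
      (h := fun t => N (t, q.2) (Y (t, q.2))) (by linarith) (by positivity) hq1 fun t ht => ?_).trans ?_)
    · have := abN (t, q.2) (mem_QQ ht.1 hq2) (Y (t, q.2))
      rwa [add_right_comm] at this
    rw [div_le_one (by linarith)]; linarith
  have hp : ∀ q ∈ QQ, |p₀ q.1 + Y q 1| ≤ b / (R + q.1) ^ 2 := fun q hq => by
    have hq1 : 0 ≤ q.1 := hq.1
    have hq2 : 0 ≤ q.2 := hq.2
    rw [y1 q hq]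
    refine (abs_add_le _ _).trans ((add_le_add (bp₀ _ hq1) (abs_integral_le_cube (a := R + q.1)
      (c := 16 * α ^ 2 * M * C) (by linarith) (by positivity) hq2 fun t ht =>
        abF _ (mem_QQ hq1 ht.1) _)).trans ?_)
    rw [hb, ← add_div]
    exact (div_le_div_iff_of_pos_right (by positivity)).2 (by nlinarith)
  have hbR : b / R ≤ (α - 1) * C := by
    rw [div_le_iff₀ hR, hb]
    nlinarith
  have abp : ∀ q ∈ QQ, ∀ X, |pp q X| ≤ b / (R + q.1) ^ 2 := fun q hq X =>
    abs_le.2 ⟨by simpa only [pr_eq hq] using pp1 q X, by simpa only [pr_eq hq] using pp2 q X⟩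
  have hψ : ∀ q ∈ QQ, |ψ₁ q.2 + Y q 4| ≤ α * C := fun q hq => by
    have hq1 : 0 ≤ q.1 := hq.1
    have hq2 : 0 ≤ q.2 := hq.2
    rw [y4 q hq]
    have := abs_integral_le_sq hR hb0.le hq1 fun t ht => abp (t, q.2) (mem_QQ ht.1 hq2) (Y (t, q.2))
    refine (abs_add_le _ _).trans ((add_le_add (bψ₁ _ hq2) this).trans ?_)
    linarith
  have hr : ∀ q ∈ QQ, R + q.1 + q.2 ≤ R + q.2 + Y q 5 := fun q hq => by
    have hq1 : 0 ≤ q.1 := hq.1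
    have hq2 : 0 ≤ q.2 := hq.2
    rw [y5 q hq]
    have c5 : Continuous fun t => sg (t, q.2) (Y (t, q.2)) :=
      Lsg.cont.comp (by fun_prop : Continuous fun t => ((t, q.2), Y (t, q.2)))
    have := intervalIntegral.integral_mono_on hq1
      (intervalIntegrable_const (μ := MeasureTheory.volume)) (c5.intervalIntegrable 0 q.1)
      fun t _ => sg1 (t, q.2) (Y (t, q.2))
    simp only [intervalIntegral.integral_const, smul_eq_mul, mul_one, sub_zero] at this
    change R + q.1 + q.2 ≤ R + q.2 + ∫ t in (0 : ℝ)..q.1, sg (t, q.2) (Y (t, q.2))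
    linarith
  have bH : ∀ q ∈ QQ, ∀ X, 0 ≤ H q X ∧ H q X ≤ 9 / 2 * α ^ 2 * C ^ 2 / (R + q.1) ^ 2 :=
    fun q hq X => by
      have hq1 : 0 ≤ q.1 := hq.1
      have hq2 : 0 ≤ q.2 := hq.2
      have s0 : 0 < R + q.1 := by linarith
      have e1 : |sg q X * ps q X * w q X| ≤ 2 * (α * C) * (R + q.1)⁻¹ := by
        have e2 : |ps q X| ≤ α * C := abs_le.2 ⟨ps1 q X, ps2 q X⟩
        have e3 : |sg q X| ≤ 2 := abs_le.2 ⟨by linarith [sg1 q X], sg2 q X⟩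
        have e4 : |w q X| ≤ (R + q.1)⁻¹ := by
          rw [abs_of_pos (w0 q X)]
          exact (wρ q hq X).trans (inv_anti₀ s0 (by linarith))
        rw [abs_mul, abs_mul]
        gcongr
      have e5 : b / (R + q.1) ^ 2 ≤ α * C * (R + q.1)⁻¹ := by
        have : b / (R + q.1) ≤ α * C := by
          calc b / (R + q.1) ≤ b / R := by gcongr; linarith
            _ ≤ (α - 1) * C := hbR
            _ ≤ _ := by nlinarith
        calc _ = b / (R + q.1) * (R + q.1)⁻¹ := by field_simp
          _ ≤ _ := by gcongr
      have e6 : |Z q X| ≤ 3 * (α * C) * (R + q.1)⁻¹ := by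
        have := abs_sub (pp q X) (sg q X * ps q X * w q X)
        have := abp q hq X
        simp only [hZ]
        linarith
      have e7 : Z q X * Z q X ≤ 9 * α ^ 2 * C ^ 2 / (R + q.1) ^ 2 := by
        rw [← abs_mul_abs_self]
        calc _ ≤ (3 * (α * C) * (R + q.1)⁻¹) * (3 * (α * C) * (R + q.1)⁻¹) := by gcongr
          _ = _ := by field_simp; ring
      have d0 : 0 ≤ 1 - 2 * mm q X * w q X := by linarith [hmw q X]
      have d1 : 1 - 2 * mm q X * w q X ≤ 1 := by
        have := mul_nonneg (mm1 q X) (w0 q X).le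
        linarith
      have i1 : (sg q X)⁻¹ ≤ 1 := inv_le_one_of_one_le₀ (sg1 q X)
      have i0 : 0 ≤ (sg q X)⁻¹ := inv_nonneg.2 (by linarith [sg1 q X])
      have z0 := mul_self_nonneg (Z q X)
      refine ⟨by positivity, ?_⟩
      calc H q X ≤ 1 / 2 * 1 * (9 * α ^ 2 * C ^ 2 / (R + q.1) ^ 2) * 1 := by
            exact mul_le_mul (mul_le_mul (by linarith) e7 z0 (by norm_num)) i1 i0 (by positivity)
        _ = _ := by ring
  have hm : ∀ q ∈ QQ, 0 ≤ m₁ q.2 + Y q 3 ∧ m₁ q.2 + Y q 3 ≤ α * M := fun q hq => by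
    have hq1 : 0 ≤ q.1 := hq.1
    have hq2 : 0 ≤ q.2 := hq.2
    have i0 : 0 ≤ intX (fun q => H q (Y q)) q :=
      intervalIntegral.integral_nonneg hq1 fun t ht => (bH _ (mem_QQ ht.1 hq2) _).1
    have i1 := (le_abs_self _).trans (abs_integral_le_sq (c := 9 / 2 * α ^ 2 * C ^ 2) hR
      (by positivity) hq1 (h := fun t => H (t, q.2) (Y (t, q.2))) fun t ht => by
        rw [abs_of_nonneg (bH _ (mem_QQ ht.1 hq2) _).1]
        exact (bH (t, q.2) (mem_QQ ht.1 hq2) _).2)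
    have i2 : 9 / 2 * α ^ 2 * C ^ 2 / R ≤ (α - 1) * M := by
      rw [div_le_iff₀ hR]
      nlinarith [mul_pos (pow_pos hα0 2) (pow_pos hC 2)]
    rw [y3 q hq]
    have i1' : intX (fun q => H q (Y q)) q ≤ 9 / 2 * α ^ 2 * C ^ 2 / R := i1
    have := bm₁ _ hq2
    constructor <;> linarith
  -- the truncations are inactive on the quadrant
  have Esg : ∀ q ∈ QQ, sg q (Y q) = 1 + Y q 0 := fun q hq =>
    sgid _ _ (by linarith [hσ q hq]) (by linarith [hσ q hq])
  have Ela : ∀ q ∈ QQ, la q (Y q) = 1 + Y q 2 := fun q hq =>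
    laid _ _ (by linarith [hlm q hq]) (by linarith [hlm q hq])
  have Epp : ∀ q ∈ QQ, pp q (Y q) = p₀ q.1 + Y q 1 := fun q hq => by
    have := ppid q (Y q)
    simp only [pr_eq hq] at this
    exact this (abs_le.1 (hp q hq)).1 (abs_le.1 (hp q hq)).2
  have Emm : ∀ q ∈ QQ, mm q (Y q) = m₁ q.2 + Y q 3 := fun q hq => by
    have := mmid q (Y q)
    simp only [pr_eq hq] at this
    exact this (hm q hq).1 (hm q hq).2
  have Eps : ∀ q ∈ QQ, ps q (Y q) = ψ₁ q.2 + Y q 4 := fun q hq => by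
    have := psid q (Y q)
    simp only [pr_eq hq] at this
    exact this (abs_le.1 (hψ q hq)).1 (abs_le.1 (hψ q hq)).2
  have Ew : ∀ q ∈ QQ, w q (Y q) = (R + q.2 + Y q 5)⁻¹ := fun q hq => by
    have := wid q (Y q)
    simp only [pr_eq hq] at this
    exact this (hr q hq)
  have rpos : ∀ q ∈ QQ, 0 < R + q.2 + Y q 5 := fun q hq => by
    have := hr q hq
    have hq1 : 0 ≤ q.1 := hq.1
    have hq2 : 0 ≤ q.2 := hq.2
    linarith
  have rm : ∀ q ∈ QQ, 0 < R + q.2 + Y q 5 - 2 * (m₁ q.2 + Y q 3) := fun q hq => by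
    have := hr q hq
    have hq1 : 0 ≤ q.1 := hq.1
    have hq2 : 0 ≤ q.2 := hq.2
    have := (hm q hq).2
    nlinarith
  set σ : ℝ × ℝ → ℝ := fun q => 1 + Y q 0 with eσ
  set lam : ℝ × ℝ → ℝ := fun q => 1 + Y q 2 with elam
  set p : ℝ × ℝ → ℝ := fun q => p₀ q.1 + Y q 1 with ep
  set m : ℝ × ℝ → ℝ := fun q => m₁ q.2 + Y q 3 with em
  set ψ : ℝ × ℝ → ℝ := fun q => ψ₁ q.2 + Y q 4 with eψ
  set r : ℝ × ℝ → ℝ := fun q => R + q.2 + Y q 5 with er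
  have EN : EqOn (Nf σ lam m r) (fun q => N q (Y q)) QQ := fun q hq => by
    have r0 := (rpos q hq).ne'
    have r1 := (rm q hq).ne'
    simp only [Nf, hN, Esg q hq, Ela q hq, Emm q hq, Ew q hq]
    change r q ≠ 0 at r0
    change r q - 2 * m q ≠ 0 at r1
    change 2 * m q * σ q * lam q / (r q * (r q - 2 * m q)) = 2 * m q * σ q * lam q *
      ((r q)⁻¹ * (r q)⁻¹) * (1 - 2 * m q * (r q)⁻¹)⁻¹
    have e : 1 - 2 * m q * (r q)⁻¹ = (r q - 2 * m q) / r q := by field_simp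
    rw [e]
    field_simp
  have EF : EqOn (fun q => Nf σ lam m r q * ψ q / r q) (fun q => F1 q (Y q)) QQ := fun q hq => by
    simp only [hF1, EN hq, Eps q hq, Ew q hq]
    rfl
  have EH : EqOn (Hf σ p m ψ r) (fun q => H q (Y q)) QQ := fun q hq => by
    have r0 := (rpos q hq).ne'
    have s0 : 1 + Y q 0 ≠ 0 := by linarith [hσ q hq]
    simp only [Hf, hH, hZ, Esg q hq, Epp q hq, Emm q hq, Ew q hq, Eps q hq]
    change r q ≠ 0 at r0
    change σ q ≠ 0 at s0
    change (r q - 2 * m q) * (p q - σ q * ψ q / r q) ^ 2 / (2 * r q * σ q) = 1 / 2 *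
      (1 - 2 * m q * (r q)⁻¹) * ((p q - σ q * ψ q * (r q)⁻¹) * (p q - σ q * ψ q * (r q)⁻¹)) *
      (σ q)⁻¹
    field_simp
  have z0 : ∀ h, ∀ x, intY h (x, 0) = 0 := fun h x => by simp [intY]
  have z1 : ∀ h, ∀ y, intX h (0, y) = 0 := fun h y => by simp [intX]
  have cp : ContinuousOn (sw fun q => p₀ q.1) QQ :=
    cp₀.comp (by fun_prop) (fun q hq => hq.2)
  refine ⟨σ, lam, p, m, ψ, r, fun q hq => ⟨?_, ?_, rpos q hq, rm q hq⟩, ?_, ?_, ?_, ?_, ?_, ?_,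
    fun x hx => ⟨?_, ?_⟩, fun y hy => ⟨?_, ?_, ?_, ?_⟩⟩
  · linarith [hσ q hq]
  · linarith [hlm q hq]
  · have := (PX.const 1).add (PX_intX (cont_sw (LN.cont_comp cY)))
    exact PX.congr this (fun q hq => congrArg (1 + ·) (y0 _ ⟨hq.2, hq.1⟩))
      (fun q hq => by simpa [sw] using EN (x := (q.2, q.1)) ⟨hq.2, hq.1⟩)
  · have := (PX.const 1).add (PX_intX (LN.cont_comp cY))
    exact PX.congr this (fun q hq => congrArg (1 + ·) (y2 _ hq))
      (fun q hq => by simpa using EN hq)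
  · have := (PX.of_y cp₀).add (PX_intX (cont_sw (LF1.cont_comp cY)))
    exact PX.congr this (fun q hq => congrArg (p₀ q.2 + ·) (y1 _ ⟨hq.2, hq.1⟩))
      (fun q hq => by simpa [sw] using EF (x := (q.2, q.1)) ⟨hq.2, hq.1⟩)
  · have := (PX.of_y cψ₁).add (PX_intX (Lpp.cont_comp cY))
    exact PX.congr this (fun q hq => congrArg (ψ₁ q.2 + ·) (y4 _ hq))
      (fun q hq => by simpa using (Epp q hq).symm)
  · have := (PX.of_y (g := fun y => R + y) (by fun_prop)).add (PX_intX (Lsg.cont_comp cY))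
    exact PX.congr this (fun q hq => congrArg (R + q.2 + ·) (y5 _ hq))
      (fun q hq => by simpa using (Esg q hq).symm)
  · have := (PX.of_y cm₁).add (PX_intX (LH.cont_comp cY))
    exact PX.congr this (fun q hq => congrArg (m₁ q.2 + ·) (y3 _ hq))
      (fun q hq => by simpa using EH hq)
  · simp only [eσ, y0 _ (mem_QQ hx le_rfl), z0, add_zero]
  · simp only [ep, y1 _ (mem_QQ hx le_rfl), z0, add_zero]
  · simp only [elam, y2 _ (mem_QQ le_rfl hy), z1, add_zero]
  · simp only [em, y3 _ (mem_QQ le_rfl hy), z1, add_zero]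
  · simp only [eψ, y4 _ (mem_QQ le_rfl hy), z1, add_zero]
  · simp only [er, y5 _ (mem_QQ le_rfl hy), z1, add_zero]

/-! ### The full system in the shifted coordinates -/

section PYcalculus

variable {f f' g g' : ℝ × ℝ → ℝ}

lemma ne_sw (h0 : ∀ p ∈ QQ, g p ≠ 0) : ∀ p ∈ QQ, sw g p ≠ 0 := fun _ hp => h0 _ ⟨hp.2, hp.1⟩

lemma PY.sub (hf : PY f f') (hg : PY g g') : PY (fun p => f p - g p) (fun p => f' p - g' p) :=
  PX.sub hf hg

lemma PY.mul (hf : PY f f') (hg : PY g g') :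
    PY (fun p => f p * g p) (fun p => f' p * g p + f p * g' p) :=
  PX.mul hf hg

lemma PY.div (hf : PY f f') (hg : PY g g') (h0 : ∀ p ∈ QQ, g p ≠ 0) :
    PY (fun p => f p / g p) (fun p => (f' p * g p - f p * g' p) / g p ^ 2) :=
  PX.div hf hg (ne_sw h0)

lemma PY.const (c : ℝ) : PY (fun _ => c) (fun _ => 0) := PX.const c

lemma CY.const (c : ℝ) : CY (fun _ => c) := CX.const c

lemma CY.sub (hf : CY f) (hg : CY g) : CY (fun p => f p - g p) := CX.sub hf hg

lemma CY.mul (hf : CY f) (hg : CY g) : CY (fun p => f p * g p) := CX.mul hf hg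

lemma CY.div (hf : CY f) (hg : CY g) (h0 : ∀ p ∈ QQ, g p ≠ 0) : CY (fun p => f p / g p) :=
  CX.div hf hg (ne_sw h0)

lemma CY.congr (h : CY f) (hf : EqOn g f QQ) : CY g := CX.congr h (eqOn_sw hf)

lemma PY.unique (h : PY f f') (h' : PY f g') : EqOn f' g' QQ :=
  fun p hp => PX.unique h h' (x := (p.2, p.1)) ⟨hp.2, hp.1⟩

/-- The `x`-version of `CY_of_linear`. -/
lemma CX_of_linear {f a c : ℝ × ℝ → ℝ} (hf : PY f (fun p => a p * f p + c p))
    (ha : CX a) (hc : CX c) (h0 : CX (fun p => f (p.1, 0))) : CX f :=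
  CY_of_linear (f := sw f) (a := sw a) (c := sw c) hf ha hc h0

lemma CY_of_PX {f c : ℝ × ℝ → ℝ} (hf : PX f c) (hc : CY c) (h0 : CY (fun p => f (0, p.2))) :
    CY f :=
  CY_of_linear (a := fun _ => 0) (hf.congr (fun _ _ => rfl) fun p _ => by ring) (CY.const 0) hc h0

lemma CX_of_PY {f c : ℝ × ℝ → ℝ} (hf : PY f c) (hc : CX c) (h0 : CX (fun p => f (p.1, 0))) :
    CX f :=
  CX_of_linear (a := fun _ => 0) (hf.congr (fun _ _ => rfl) fun p _ => by ring) (CX.const 0) hc h0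

/-- If `∂ₓ f = a` and `∂_y a = c`, then `∂_y f` exists as soon as it does on the edge `x = 0`,
and `∂ₓ ∂_y f = c`. -/
lemma PX.mixed {f a c : ℝ × ℝ → ℝ} {g g' : ℝ → ℝ} (hf : PX f a) (ha : PY a c)
    (hg : ∀ y, 0 ≤ y → HasDerivWithinAt g (g' y) (Ici 0) y) (cg : ContinuousOn g' (Ici 0))
    (h0 : ∀ y, 0 ≤ y → f (0, y) = g y) :
    ∃ b, PY f b ∧ PX b c ∧ ∀ y, b (0, y) = g' y := by
  have hc : ContinuousOn c QQ := cont_unsw (PX.cont' ha)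
  refine ⟨fun p => g' p.2 + intX c p, ?_, ?_, fun y => by simp [intX]⟩
  · have h1 : PY (fun p => g p.2) (fun p => g' p.2) := PX.of_x cg hg
    have h2 : PY (intX a) (intX c) := PX_intY ha
    have h3 : PY (fun p => g p.2 + intX a p) (fun p => g' p.2 + intX c p) := PX.add h1 h2
    exact h3.congr (fun p hp => by rw [hf.ftc hp, h0 _ hp.2]) fun _ _ => rfl
  · exact ((PX.of_y cg).add (PX_intX hc)).congr (fun _ _ => rfl) (fun p _ => by simp)

lemma PX.eq_of_edge {f g a : ℝ × ℝ → ℝ} (hf : PX f a) (hg : PX g a)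
    (h0 : ∀ y, 0 ≤ y → f (0, y) = g (0, y)) : EqOn f g QQ := fun p hp => by
  rw [hf.ftc hp, hg.ftc hp, h0 _ hp.2]

end PYcalculus

/-- Global solution of the full characteristic problem in the coordinates `x = -u - R`,
`y = v - R`. Here `σ, λ` are the derivatives of `r`, `p, q` those of `ψ = r φ`, and the two mass
equations and the two wave equations are all recorded. -/
theorem exists_global {R M C α : ℝ} (hR : 0 < R) (hM : 0 < M) (hC : 0 < C) (hα : 1 < α)
    (h1 : 16 * α * M ≤ R) (h2 : 1 + 8 * α ^ 2 * M ≤ (α - 1) * R)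
    (h3 : 6 * α ^ 2 * C ^ 2 ≤ (α - 1) * M * R) {p₀ p₀' m₁ m₁' ψ₁ ψ₁' ψ₁'' : ℝ → ℝ}
    (dp₀ : ∀ x, 0 ≤ x → HasDerivWithinAt p₀ (p₀' x) (Ici 0) x) (cp₀' : ContinuousOn p₀' (Ici 0))
    (dm₁ : ∀ y, 0 ≤ y → HasDerivWithinAt m₁ (m₁' y) (Ici 0) y) (cm₁' : ContinuousOn m₁' (Ici 0))
    (dψ₁ : ∀ y, 0 ≤ y → HasDerivWithinAt ψ₁ (ψ₁' y) (Ici 0) y)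
    (dψ₁' : ∀ y, 0 ≤ y → HasDerivWithinAt ψ₁' (ψ₁'' y) (Ici 0) y)
    (cψ₁'' : ContinuousOn ψ₁'' (Ici 0))
    (bp₀ : ∀ x, 0 ≤ x → |p₀ x| ≤ C / (R + x) ^ 2)
    (bm₁ : ∀ y, 0 ≤ y → 0 ≤ m₁ y ∧ m₁ y ≤ M) (bψ₁ : ∀ y, 0 ≤ y → |ψ₁ y| ≤ C)
    (hcon : ∀ y, 0 ≤ y →
      m₁' y = 1 / 2 * (1 - 2 * m₁ y / (R + y)) * (ψ₁' y - ψ₁ y / (R + y)) ^ 2) :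
    ∃ σ lam p q m ψ r N Z θ : ℝ × ℝ → ℝ,
      (∀ s ∈ QQ, 0 < σ s ∧ 0 < lam s ∧ 0 < r s ∧ 0 < r s - 2 * m s) ∧
      PX r σ ∧ PY r lam ∧ PY σ N ∧ PX lam N ∧ PX ψ p ∧ PY ψ q ∧
      (∀ s ∈ QQ, N s = 2 * m s * σ s * lam s / (r s * (r s - 2 * m s))) ∧
      (∀ s ∈ QQ, Z s = p s - σ s * ψ s / r s) ∧ (∀ s ∈ QQ, θ s = q s - lam s * ψ s / r s) ∧
      PY Z (fun s => -(θ s * σ s / r s)) ∧ PX θ (fun s => -(Z s * lam s / r s)) ∧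
      PX m (fun s => (r s - 2 * m s) * Z s ^ 2 / (2 * r s * σ s)) ∧
      PY m (fun s => (r s - 2 * m s) * θ s ^ 2 / (2 * r s * lam s)) ∧
      CY lam ∧ CX σ ∧ CX Z ∧ CY θ ∧
      ContDiffOn ℝ 2 r QQ ∧ ContDiffOn ℝ 2 ψ QQ ∧ ContDiffOn ℝ 2 m QQ ∧
      (∀ x, 0 ≤ x → σ (x, 0) = 1 ∧ p (x, 0) = p₀ x) ∧
      (∀ y, 0 ≤ y → lam (0, y) = 1 ∧ m (0, y) = m₁ y ∧ ψ (0, y) = ψ₁ y ∧ r (0, y) = R + y) := by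
  have cp₀ : ContinuousOn p₀ (Ici 0) := fun x hx => (dp₀ x hx).continuousWithinAt
  have cm₁ : ContinuousOn m₁ (Ici 0) := fun x hx => (dm₁ x hx).continuousWithinAt
  have cψ₁ : ContinuousOn ψ₁ (Ici 0) := fun x hx => (dψ₁ x hx).continuousWithinAt
  have cψ₁' : ContinuousOn ψ₁' (Ici 0) := fun x hx => (dψ₁' x hx).continuousWithinAt
  obtain ⟨σ, lam, p, m, ψ, r, hpos, hσ, hl, hp, hψ, hr, hm, bx, bY⟩ :=
    exists_core hR hM hC hα h1 h2 h3 cp₀ cm₁ cψ₁ bp₀ bm₁ bψ₁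
  set N := Nf σ lam m r with hN
  have σ0 : ∀ s ∈ QQ, σ s ≠ 0 := fun s hs => (hpos s hs).1.ne'
  have l0 : ∀ s ∈ QQ, lam s ≠ 0 := fun s hs => (hpos s hs).2.1.ne'
  have r0 : ∀ s ∈ QQ, r s ≠ 0 := fun s hs => (hpos s hs).2.2.1.ne'
  have d0 : ∀ s ∈ QQ, r s - 2 * m s ≠ 0 := fun s hs => (hpos s hs).2.2.2.ne'
  have rd0 : ∀ s ∈ QQ, r s * (r s - 2 * m s) ≠ 0 := fun s hs => mul_ne_zero (r0 s hs) (d0 s hs)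
  have rs0 : ∀ s ∈ QQ, 2 * r s * σ s ≠ 0 := fun s hs =>
    mul_ne_zero (mul_ne_zero two_ne_zero (r0 s hs)) (σ0 s hs)
  have rl0 : ∀ s ∈ QQ, 2 * r s * lam s ≠ 0 := fun s hs =>
    mul_ne_zero (mul_ne_zero two_ne_zero (r0 s hs)) (l0 s hs)
  -- the `y`-derivatives of `r` and `ψ`
  obtain ⟨l', hrl, hl', el'⟩ := hr.mixed hσ (g := fun y => R + y) (g' := fun _ => 1)
    (fun y _ => ((hasDerivWithinAt_id y _).const_add R)) continuousOn_const
    (fun y hy => (bY y hy).2.2.2)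
  have hry : PY r lam := hrl.congr (fun _ _ => rfl)
    (hl.eq_of_edge hl' fun y hy => by rw [(bY y hy).1, el'])
  obtain ⟨q, hψy, hq, eq0⟩ := hψ.mixed hp dψ₁ cψ₁' (fun y hy => (bY y hy).2.2.1)
  -- first derivatives of all the unknowns
  have Yr := hry.cy
  have Xr := hr.cx
  have Yψ := hψy.cy
  have Xψ := hψ.cx
  have Yσ := hσ.cy
  have Xl := hl.cx
  have Yp := hp.cy
  have Xq := hq.cx
  have Xm := hm.cx
  set Z : ℝ × ℝ → ℝ := fun s => p s - σ s * ψ s / r s with hZ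
  set θ : ℝ × ℝ → ℝ := fun s => q s - lam s * ψ s / r s with hθ
  have YZ : CY Z := Yp.sub ((Yσ.mul Yψ).div Yr r0)
  have Ym : CY m := by
    refine CY_of_linear (a := fun s => -2 * (Z s * Z s) / (2 * r s * σ s))
      (c := fun s => r s * (Z s * Z s) / (2 * r s * σ s))
      (hm.congr (fun _ _ => rfl) fun s hs => ?_)
      (((CY.const (-2)).mul (YZ.mul YZ)).div (((CY.const 2).mul Yr).mul Yσ) rs0)
      ((Yr.mul (YZ.mul YZ)).div (((CY.const 2).mul Yr).mul Yσ) rs0) ?_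
    · simp only [Hf, hZ]; ring
    · exact CX.congr (PX.of_x cm₁' dm₁).cx fun s hs => (bY _ hs.1).2.1
  have Yl : CY lam := by
    refine CY_of_linear (a := fun s => 2 * m s * σ s / (r s * (r s - 2 * m s))) (c := fun _ => 0)
      (hl.congr (fun _ _ => rfl) fun s hs => ?_)
      ((((CY.const 2).mul Ym).mul Yσ).div (Yr.mul (Yr.sub ((CY.const 2).mul Ym))) rd0)
      (CY.const 0) ?_
    · simp only [hN, Nf]; ring
    · exact CX.congr (CX.const 1) fun s hs => (bY _ hs.1).1
  have Xσ : CX σ := by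
    refine CX_of_linear (a := fun s => 2 * m s * lam s / (r s * (r s - 2 * m s))) (c := fun _ => 0)
      (hσ.congr (fun _ _ => rfl) fun s hs => ?_)
      ((((CX.const 2).mul Xm).mul Xl).div (Xr.mul (Xr.sub ((CX.const 2).mul Xm))) rd0)
      (CX.const 0) ?_
    · simp only [hN, Nf]; ring
    · exact CX.congr (CX.const 1) fun s hs => (bx _ hs.1).1
  have XN : CX N := (((((CX.const 2).mul Xm).mul Xσ).mul Xl).div
    (Xr.mul (Xr.sub ((CX.const 2).mul Xm))) rd0)
  have YN : CY N := (((((CY.const 2).mul Ym).mul Yσ).mul Yl).div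
    (Yr.mul (Yr.sub ((CY.const 2).mul Ym))) rd0)
  have Xp : CX p := CX_of_PY hp ((XN.mul Xψ).div Xr r0)
    ((PX.of_x cp₀' dp₀).cx.congr fun s hs => (bx _ hs.1).2)
  have Yq : CY q := CY_of_PX hq ((YN.mul Yψ).div Yr r0)
    (CX.congr (PX.of_x cψ₁'' dψ₁').cx fun s _ => eq0 s.1)
  have XZ : CX Z := Xp.sub ((Xσ.mul Xψ).div Xr r0)
  have Xθ : CX θ := Xq.sub ((Xl.mul Xψ).div Xr r0)
  have Yθ : CY θ := Yq.sub ((Yl.mul Yψ).div Yr r0)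
  -- the wave equations
  have hZy : PY Z (fun s => -(θ s * σ s / r s)) := by
    refine (hp.sub ((hσ.mul hψy).div hry r0)).congr (fun _ _ => rfl) fun s hs => ?_
    have := r0 s hs
    simp only [hθ]
    field_simp
    ring
  have hθx : PX θ (fun s => -(Z s * lam s / r s)) := by
    refine (hq.sub ((hl.mul hψ).div hr r0)).congr (fun _ _ => rfl) fun s hs => ?_
    have := r0 s hs
    simp only [hZ]
    field_simp
    ring
  have hm' : PX m (fun s => (r s - 2 * m s) * Z s ^ 2 / (2 * r s * σ s)) := hm
  have YH : CY fun s => (r s - 2 * m s) * Z s ^ 2 / (2 * r s * σ s) :=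
    (((Yr.sub ((CY.const 2).mul Ym)).mul (YZ.mul YZ)).div (((CY.const 2).mul Yr).mul Yσ) rs0).congr
      fun s _ => by simp only [sq]
  have XH : CX fun s => (r s - 2 * m s) * Z s ^ 2 / (2 * r s * σ s) :=
    (((Xr.sub ((CX.const 2).mul Xm)).mul (XZ.mul XZ)).div (((CX.const 2).mul Xr).mul Xσ) rs0).congr
      fun s _ => by simp only [sq]
  have YG : CY fun s => (r s - 2 * m s) * θ s ^ 2 / (2 * r s * lam s) :=
    (((Yr.sub ((CY.const 2).mul Ym)).mul (Yθ.mul Yθ)).div (((CY.const 2).mul Yr).mul Yl) rl0).congr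
      fun s _ => by simp only [sq]
  have XG : CX fun s => (r s - 2 * m s) * θ s ^ 2 / (2 * r s * lam s) :=
    (((Xr.sub ((CX.const 2).mul Xm)).mul (Xθ.mul Xθ)).div (((CX.const 2).mul Xr).mul Xl) rl0).congr
      fun s _ => by simp only [sq]
  -- propagation of the mass equation along `y`: the defect `n - G` solves a homogeneous linear
  -- equation in `x` and vanishes on the edge `x = 0`
  have hmy : PY m (fun s => (r s - 2 * m s) * θ s ^ 2 / (2 * r s * lam s)) := by
    obtain ⟨Hy, hHy⟩ := YH
    obtain ⟨n, hn, hnx, en⟩ := hm'.mixed (c := sw Hy) hHy dm₁ cm₁' (fun y hy => (bY y hy).2.1)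
    have eHy := PY.unique (g' := sw Hy) ((((hry.sub ((PY.const 2).mul hn)).mul (hZy.mul hZy)).div
      (((PY.const 2).mul hry).mul hσ) rs0).congr (fun s _ => by simp only [sq])
        (fun _ _ => rfl)) hHy
    have hG := ((hr.sub ((PX.const 2).mul hm')).mul (hθx.mul hθx)).div
      (((PX.const 2).mul hr).mul hl) rl0
    have hE := hnx.sub hG
    have key := zero_of_linear (a := fun s => -(Z s * Z s) / (r s * σ s))
      (((XZ.cont.mul XZ.cont).neg).div (Xr.cont.mul Xσ.cont)
        fun s hs => mul_ne_zero (r0 s hs) (σ0 s hs))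
      (hE.congr (fun _ _ => rfl) fun s hs => ?_) fun y hy => ?_
    · refine hn.congr (fun _ _ => rfl) fun s hs => ?_
      have := key s hs
      simp only [sq]
      linarith
    · beta_reduce
      rw [← eHy hs]
      have := r0 s hs
      have := d0 s hs
      have := σ0 s hs
      have := l0 s hs
      simp only [hN, Nf]
      field_simp
      ring
    · obtain ⟨b1, b2, b3, b4⟩ := bY y hy
      have : R + y ≠ 0 := by positivity
      simp only [hθ, en, eq0, b1, b2, b3, b4, hcon y hy]
      field_simp
      ring
  refine ⟨σ, lam, p, q, m, ψ, r, N, Z, θ, hpos, hr, hry, hσ, hl, hψ, hψy, fun _ _ => rfl,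
    fun _ _ => rfl, fun _ _ => rfl, hZy, hθx, hm', hmy,
    Yl, Xσ, XZ, Yθ, ?_, ?_, ?_, bx, bY⟩
  · exact hr.contDiffOn hry 1 (Xσ.contDiffOn Yσ) (Xl.contDiffOn Yl)
  · exact hψ.contDiffOn hψy 1 (Xp.contDiffOn Yp) (Xq.contDiffOn Yq)
  · exact hm'.contDiffOn hmy 1 (XH.contDiffOn YH) (XG.contDiffOn YG)

/-! ### Return to null coordinates -/

/-- The affine change of coordinates `x = -u - R`, `y = v - R` from `Quad R` to `QQ`. -/
def toQQ (R : ℝ) (p : ℝ × ℝ) : ℝ × ℝ := (-p.1 - R, p.2 - R)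

lemma toQQ_mem {R : ℝ} {p : ℝ × ℝ} (hp : p ∈ Quad R) : toQQ R p ∈ QQ := by
  have h1 : p.1 ≤ -R := hp.1
  have h2 : R ≤ p.2 := hp.2
  exact mem_QQ (by linarith) (by linarith)

lemma uniqueDiffOn_Quad (R : ℝ) : UniqueDiffOn ℝ (Quad R) :=
  (uniqueDiffOn_Iic _).prod (uniqueDiffOn_Ici _)

lemma contDiffOn_toQQ {R : ℝ} {f : ℝ × ℝ → ℝ} (hf : ContDiffOn ℝ 2 f QQ) :
    ContDiffOn ℝ 2 (fun p => f (toQQ R p)) (Quad R) :=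
  hf.comp (t := QQ) (by unfold toQQ; fun_prop) fun _ hp => toQQ_mem hp

lemma hasFDerivWithinAt_toQQ {R : ℝ} {f a b : ℝ × ℝ → ℝ} (hx : PX f a) (hy : PY f b) {p : ℝ × ℝ}
    (hp : p ∈ Quad R) :
    HasFDerivWithinAt (fun p => f (toQQ R p)) (-(a (toQQ R p)) • ContinuousLinearMap.fst ℝ ℝ ℝ +
      b (toQQ R p) • ContinuousLinearMap.snd ℝ ℝ ℝ) (Quad R) p := by
  have hT : HasFDerivWithinAt (toQQ R)
      ((-ContinuousLinearMap.fst ℝ ℝ ℝ).prod (ContinuousLinearMap.snd ℝ ℝ ℝ)) (Quad R) p :=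
    (((hasFDerivWithinAt_fst).neg.sub_const R)).prodMk ((hasFDerivWithinAt_snd).sub_const R)
  refine ((hx.hasFDeriv hy (toQQ_mem hp)).comp p hT fun _ h => toQQ_mem h).congr_fderiv ?_
  ext <;> simp

/-- The sign comes from `x = -u - R`. -/
lemma pdu_toQQ {R : ℝ} {f g a : ℝ × ℝ → ℝ} (hx : PX f a) (hy : CY f)
    (hg : ∀ p ∈ Quad R, g p = f (toQQ R p)) {p : ℝ × ℝ} (hp : p ∈ Quad R) :
    pdu (Quad R) g p = -a (toQQ R p) := by
  obtain ⟨b, hb⟩ := hy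
  rw [pdu, ((hasFDerivWithinAt_toQQ (b := sw b) hx hb hp).congr hg (hg p hp)).fderivWithin
    (uniqueDiffOn_Quad R p hp)]
  simp

lemma pdv_toQQ {R : ℝ} {f g b : ℝ × ℝ → ℝ} (hx : CX f) (hy : PY f b)
    (hg : ∀ p ∈ Quad R, g p = f (toQQ R p)) {p : ℝ × ℝ} (hp : p ∈ Quad R) :
    pdv (Quad R) g p = b (toQQ R p) := by
  obtain ⟨a, ha⟩ := hx
  rw [pdv, ((hasFDerivWithinAt_toQQ ha hy hp).congr hg (hg p hp)).fderivWithin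
    (uniqueDiffOn_Quad R p hp)]
  simp

/-- A solution in the `(x, y)` coordinates gives a solution in the sense of `EFSol`. -/
theorem EFSol.of_QQ (R : ℝ) {σ lam p q m ψ r N Z θ : ℝ × ℝ → ℝ}
    (hpos : ∀ s ∈ QQ, 0 < σ s ∧ 0 < lam s ∧ 0 < r s ∧ 0 < r s - 2 * m s)
    (hrx : PX r σ) (hry : PY r lam) (hσ : PY σ N) (hl : PX lam N) (hψx : PX ψ p) (hψy : PY ψ q)
    (eN : ∀ s ∈ QQ, N s = 2 * m s * σ s * lam s / (r s * (r s - 2 * m s)))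
    (eZ : ∀ s ∈ QQ, Z s = p s - σ s * ψ s / r s) (eθ : ∀ s ∈ QQ, θ s = q s - lam s * ψ s / r s)
    (hZ : PY Z (fun s => -(θ s * σ s / r s))) (hθ : PX θ (fun s => -(Z s * lam s / r s)))
    (hmx : PX m (fun s => (r s - 2 * m s) * Z s ^ 2 / (2 * r s * σ s)))
    (hmy : PY m (fun s => (r s - 2 * m s) * θ s ^ 2 / (2 * r s * lam s)))
    (Yl : CY lam) (Xσ : CX σ) (XZ : CX Z) (Yθ : CY θ) (cr : ContDiffOn ℝ 2 r QQ)
    (cψ : ContDiffOn ℝ 2 ψ QQ) (cm : ContDiffOn ℝ 2 m QQ) :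
    EFSol R (Quad R) (fun s => r (toQQ R s)) (fun s => m (toQQ R s))
      (fun s => ψ (toQQ R s) / r (toQQ R s)) := by
  have r0 : ∀ s ∈ QQ, r s ≠ 0 := fun s hs => (hpos s hs).2.2.1.ne'
  have φx : PX (fun s => ψ s / r s) (fun s => Z s / r s) :=
    (hψx.div hrx r0).congr (fun _ _ => rfl) fun s hs => by
      have := r0 s hs
      simp only [eZ s hs]; field_simp
  have φy : PY (fun s => ψ s / r s) (fun s => θ s / r s) :=
    (hψy.div hry r0).congr (fun _ _ => rfl) fun s hs => by
      have := r0 s hs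
      simp only [eθ s hs]; field_simp
  have ru := fun s (hs : s ∈ Quad R) => pdu_toQQ (R := R) hrx hry.cy (fun _ _ => rfl) hs
  have rv := fun s (hs : s ∈ Quad R) => pdv_toQQ (R := R) hrx.cx hry (fun _ _ => rfl) hs
  have mu := fun s (hs : s ∈ Quad R) => pdu_toQQ (R := R) hmx hmy.cy (fun _ _ => rfl) hs
  have mv := fun s (hs : s ∈ Quad R) => pdv_toQQ (R := R) hmx.cx hmy (fun _ _ => rfl) hs
  have φu := fun s (hs : s ∈ Quad R) => pdu_toQQ (R := R) φx φy.cy (fun _ _ => rfl) hs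
  have φv := fun s (hs : s ∈ Quad R) => pdv_toQQ (R := R) φx.cx φy (fun _ _ => rfl) hs
  have ne : ∀ s ∈ Quad R, σ (toQQ R s) ≠ 0 ∧ lam (toQQ R s) ≠ 0 ∧ r (toQQ R s) ≠ 0 ∧
      r (toQQ R s) - 2 * m (toQQ R s) ≠ 0 := fun s hs => by
    have := hpos _ (toQQ_mem hs)
    exact ⟨this.1.ne', this.2.1.ne', this.2.2.1.ne', this.2.2.2.ne'⟩
  have hμ : ∀ s ∈ Quad R, 1 - 2 * m (toQQ R s) / r (toQQ R s) =
      (r (toQQ R s) - 2 * m (toQQ R s)) / r (toQQ R s) := fun s hs => by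
    have := (ne s hs).2.2.1
    field_simp
  refine
    { subset := Subset.rfl
      relOpen := ⟨univ, isOpen_univ, (univ_inter _).symm⟩
      hr := contDiffOn_toQQ cr
      hm := contDiffOn_toQQ cm
      hphi := contDiffOn_toQQ (cψ.div cr r0)
      rpos := fun s hs => (hpos _ (toQQ_mem hs)).2.2.1
      mu_ne := fun s hs => by
        have := (hpos _ (toQQ_mem hs)).2.2.2
        intro h
        linarith
      eq_lam := fun s hs => ?_
      eq_nu := fun s hs => ?_
      eq_mu := fun s hs => ?_
      eq_mv := fun s hs => ?_
      eq_theta := fun s hs => ?_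
      eq_zeta := fun s hs => ?_ }
  · rw [pdu_toQQ hl Yl rv hs, rv s hs, ru s hs, hμ s hs, eN _ (toQQ_mem hs)]
    obtain ⟨n1, n2, n3, n4⟩ := ne s hs
    field_simp
  · rw [pdv_toQQ (f := fun s => 0 - σ s) ((CX.const 0).sub Xσ) ((PY.const 0).sub hσ)
      (fun s hs => by rw [ru s hs]; ring) hs, rv s hs, ru s hs, hμ s hs, eN _ (toQQ_mem hs)]
    obtain ⟨n1, n2, n3, n4⟩ := ne s hs
    field_simp
    ring
  · rw [mu s hs, ru s hs, φu s hs, hμ s hs]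
    obtain ⟨n1, n2, n3, n4⟩ := ne s hs
    field_simp
  · rw [mv s hs, rv s hs, φv s hs, hμ s hs]
    obtain ⟨n1, n2, n3, n4⟩ := ne s hs
    field_simp
  · rw [pdu_toQQ (f := θ) hθ Yθ (fun s hs => ?_) hs, rv s hs, φu s hs]
    · obtain ⟨n1, n2, n3, n4⟩ := ne s hs
      field_simp
    · rw [φv s hs]
      have := (ne s hs).2.2.1
      field_simp
  · rw [pdv_toQQ (f := fun s => 0 - Z s) ((CX.const 0).sub XZ) ((PY.const 0).sub hZ)
      (fun s hs => ?_) hs, ru s hs, φv s hs]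
    · obtain ⟨n1, n2, n3, n4⟩ := ne s hs
      field_simp
      ring
    · rw [φu s hs]
      have := (ne s hs).2.2.1
      field_simp
      ring

/-! ### The data on the initial rays -/

/-- A `C²` function on a half-line, together with its first two derivatives. -/
lemma exists_deriv_two {g : ℝ → ℝ} (hg : ContDiffOn ℝ 2 g (Ici 0)) :
    ∃ g' g'' : ℝ → ℝ, (∀ x, 0 ≤ x → HasDerivWithinAt g (g' x) (Ici 0) x) ∧
      (∀ x, 0 ≤ x → HasDerivWithinAt g' (g'' x) (Ici 0) x) ∧ ContinuousOn g'' (Ici 0) := by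
  have hu := uniqueDiffOn_Ici (0 : ℝ)
  have h1 : ContDiffOn ℝ 1 (derivWithin g (Ici 0)) (Ici 0) := hg.derivWithin hu (by norm_num)
  exact ⟨_, _, fun x hx => (hg.differentiableOn (by norm_num) x hx).hasDerivWithinAt,
    fun x hx => (h1.differentiableOn (by norm_num) x hx).hasDerivWithinAt,
    h1.continuousOn_derivWithin hu le_rfl⟩

lemma hasDerivWithinAt_unique {f : ℝ → ℝ} {a b x : ℝ} (hx : 0 ≤ x)
    (ha : HasDerivWithinAt f a (Ici 0) x) (hb : HasDerivWithinAt f b (Ici 0) x) : a = b :=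
  (uniqueDiffOn_Ici (0 : ℝ) x hx).eq_deriv _ ha hb

/-- Two functions of one variable with equal derivatives and initial values agree. -/
lemma eq_of_hasDerivWithinAt {f g h : ℝ → ℝ} (ch : ContinuousOn h (Ici 0))
    (hf : ∀ x, 0 ≤ x → HasDerivWithinAt f (h x) (Ici 0) x)
    (hg : ∀ x, 0 ≤ x → HasDerivWithinAt g (h x) (Ici 0) x) (h0 : f 0 = g 0) :
    ∀ x, 0 ≤ x → f x = g x := fun _ hx =>
  (PX.of_x ch hf).eq_of_edge (PX.of_x ch hg) (fun _ _ => h0) (mem_QQ hx (le_refl (0 : ℝ)))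

lemma PX.edge {f f' : ℝ × ℝ → ℝ} (h : PX f f') :
    ∀ x, 0 ≤ x → HasDerivWithinAt (fun t => f (t, 0)) (f' (x, 0)) (Ici 0) x :=
  fun x hx => h.deriv x hx 0 le_rfl

lemma cont_edge {f : ℝ × ℝ → ℝ} (h : ContinuousOn f QQ) :
    ContinuousOn (fun x => f (x, 0)) (Ici 0) :=
  h.comp (by fun_prop) fun _ hx => mem_QQ hx le_rfl

/-- The solution attains the prescribed values on the edge `y = 0`. -/
lemma edge_values {R : ℝ} (hR : 0 < R) {σ p m ψ r Z : ℝ × ℝ → ℝ} {p₀ μ Ψ : ℝ → ℝ}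
    (cp₀ : ContinuousOn p₀ (Ici 0))
    (hrx : PX r σ) (hψx : PX ψ p) (eZ : ∀ s ∈ QQ, Z s = p s - σ s * ψ s / r s)
    (hmx : PX m (fun s => (r s - 2 * m s) * Z s ^ 2 / (2 * r s * σ s)))
    (bx : ∀ x, 0 ≤ x → σ (x, 0) = 1 ∧ p (x, 0) = p₀ x) (r0 : r (0, 0) = R)
    (ψ0 : ψ (0, 0) = Ψ 0) (m0 : m (0, 0) = μ 0)
    (dΨ : ∀ x, 0 ≤ x → HasDerivWithinAt Ψ (p₀ x) (Ici 0) x)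
    (dμ : ∀ x, 0 ≤ x → HasDerivWithinAt μ
      (1 / 2 * (1 - 2 * μ x / (R + x)) * (p₀ x - Ψ x / (R + x)) ^ 2) (Ici 0) x) :
    ∀ x, 0 ≤ x → r (x, 0) = R + x ∧ ψ (x, 0) = Ψ x ∧ m (x, 0) = μ x := by
  have er : ∀ x, 0 ≤ x → r (x, 0) = R + x :=
    eq_of_hasDerivWithinAt (h := fun _ => 1) continuousOn_const
      (fun x hx => by simpa only [(bx x hx).1] using hrx.edge x hx)
      (fun x _ => (hasDerivWithinAt_id x _).const_add R) (by simp [r0])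
  have eψ : ∀ x, 0 ≤ x → ψ (x, 0) = Ψ x :=
    eq_of_hasDerivWithinAt cp₀ (fun x hx => by simpa only [(bx x hx).2] using hψx.edge x hx) dΨ ψ0
  refine fun x hx => ⟨er x hx, eψ x hx, ?_⟩
  have cΨ : ContinuousOn Ψ (Ici 0) := fun x hx => (dΨ x hx).continuousWithinAt
  have cμ : ContinuousOn μ (Ici 0) := fun x hx => (dμ x hx).continuousWithinAt
  have s0 : ∀ x ∈ Ici (0 : ℝ), R + x ≠ 0 := fun x hx => by
    have : (0 : ℝ) ≤ x := hx
    positivity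
  have cs : ContinuousOn (fun x => R + x) (Ici 0) := by fun_prop
  have cZ : ContinuousOn (fun x => p₀ x - Ψ x / (R + x)) (Ici 0) := cp₀.sub (cΨ.div cs s0)
  have ca : ContinuousOn (fun x => -(p₀ x - Ψ x / (R + x)) ^ 2 / (R + x)) (Ici 0) :=
    ((cZ.pow 2).neg).div cs s0
  have cd : ContinuousOn (fun x => m (x, 0) - μ x) (Ici 0) := (cont_edge hmx.cont).sub cμ
  -- the difference of the two mass functions solves a homogeneous linear equation
  have key := zero_of_linear (f := fun s => m (s.1, 0) - μ s.1)
    (a := fun s => -(p₀ s.1 - Ψ s.1 / (R + s.1)) ^ 2 / (R + s.1))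
    (ca.comp (by fun_prop) fun s hs => hs.1)
    (PX.of_x (g := fun x => m (x, 0) - μ x)
      (g' := fun x => -(p₀ x - Ψ x / (R + x)) ^ 2 / (R + x) * (m (x, 0) - μ x)) (ca.mul cd)
      fun x hx => ((hmx.edge x hx).sub (dμ x hx)).congr_deriv ?_)
    (fun y _ => by simp [m0]) _ (mem_QQ hx (le_refl (0 : ℝ)))
  · simpa [sub_eq_zero] using key
  · have := s0 x hx
    rw [eZ _ (mem_QQ hx le_rfl), er x hx, eψ x hx, (bx x hx).1, (bx x hx).2]
    field_simp
    ring

section Data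

variable {R : ℝ} {D : Set (ℝ × ℝ)} {f : ℝ × ℝ → ℝ}

lemma uniqueDiffOn_of_relOpen (h : ∃ U : Set (ℝ × ℝ), IsOpen U ∧ D = U ∩ Quad R) :
    UniqueDiffOn ℝ D := by
  obtain ⟨U, hU, rfl⟩ := h
  rw [inter_comm]
  exact (uniqueDiffOn_Quad R).inter hU

/-- The derivative along the ray `u = -R`, parametrised by `y = v - R`, is `∂_v`. -/
lemma hasDerivWithinAt_out (hD : ∀ v ≥ R, ((-R, v) : ℝ × ℝ) ∈ D) (hf : DifferentiableOn ℝ f D)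
    {y : ℝ} (hy : 0 ≤ y) :
    HasDerivWithinAt (fun t => f (-R, R + t)) (pdv D f (-R, R + y)) (Ici 0) y := by
  have h1 := (hf _ (hD (R + y) (by linarith))).hasFDerivWithinAt
  have h2 : HasDerivWithinAt (fun t : ℝ => ((-R, R + t) : ℝ × ℝ)) (0, 1) (Ici 0) y :=
    (hasDerivWithinAt_const y _ (-R)).prodMk ((hasDerivWithinAt_id y _).const_add R)
  exact h1.comp_hasDerivWithinAt y h2 fun t ht => hD _ (le_add_of_nonneg_right ht)

/-- The derivative along the ray `v = R`, parametrised by `x = -u - R`, is `-∂_u`. -/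
lemma hasDerivWithinAt_in (hD : ∀ u ≤ -R, ((u, R) : ℝ × ℝ) ∈ D) (hf : DifferentiableOn ℝ f D)
    {x : ℝ} (hx : 0 ≤ x) :
    HasDerivWithinAt (fun t => f (-(R + t), R)) (-pdu D f (-(R + x), R)) (Ici 0) x := by
  have h1 := (hf _ (hD (-(R + x)) (by linarith))).hasFDerivWithinAt
  have h2 : HasDerivWithinAt (fun t : ℝ => ((-(R + t), R) : ℝ × ℝ)) (-1, 0) (Ici 0) x :=
    (((hasDerivWithinAt_id x _).const_add R).neg).prodMk (hasDerivWithinAt_const x _ R)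
  refine (h1.comp_hasDerivWithinAt x h2 fun t ht => hD _ (by
    have : (0 : ℝ) ≤ t := ht
    linarith)).congr_deriv ?_
  have : ((-1, 0) : ℝ × ℝ) = -(1, 0) := by simp
  rw [this, map_neg, pdu]

lemma contDiffOn_out (hD : ∀ v ≥ R, ((-R, v) : ℝ × ℝ) ∈ D) (hf : ContDiffOn ℝ 2 f D) :
    ContDiffOn ℝ 2 (fun t => f (-R, R + t)) (Ici 0) :=
  hf.comp (by fun_prop) fun t ht => hD _ (le_add_of_nonneg_right ht)

lemma contDiffOn_in (hD : ∀ u ≤ -R, ((u, R) : ℝ × ℝ) ∈ D) (hf : ContDiffOn ℝ 2 f D) :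
    ContDiffOn ℝ 2 (fun t => f (-(R + t), R)) (Ici 0) :=
  hf.comp (by fun_prop) fun t ht => hD _ (by
    have : (0 : ℝ) ≤ t := ht
    linarith)

end Data

/-- The largeness conditions on `R`, in the form used for the a priori bounds. -/
lemma largeness {R M α : ℝ} (hα : 1 < α) (hM : 0 < M) (hR1 : 1 ≤ R)
    (hR2 : R > (4 * α / (α - 1)) ^ 2) (hR3 : R > (1 + 16 * α ^ 4 * M) ^ 2 / α ^ 2) :
    16 * α * M ≤ R ∧ 1 + 8 * α ^ 2 * M ≤ (α - 1) * R := by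
  have hα0 : 0 < α := by linarith
  have hα1 : 0 < α - 1 := by linarith
  have hα3 : 1 ≤ α ^ 3 := one_le_pow₀ hα.le
  have hα2 : 1 ≤ α ^ 2 := one_le_pow₀ hα.le
  have h4 : α ^ 4 = α ^ 3 * α := by ring
  have h42 : α ^ 4 = α ^ 2 * α ^ 2 := by ring
  constructor
  · rw [gt_iff_lt, div_lt_iff₀ (by positivity)] at hR3
    have e : 16 * α * M * α ^ 2 = 16 * α ^ 3 * M := by ring
    have e1 : α ^ 3 * M ≤ α ^ 4 * M := by
      have : α ^ 3 ≤ α ^ 4 := by rw [h4]; nlinarith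
      gcongr
    have e2 : 0 ≤ α ^ 4 * M := by positivity
    have : 16 * α * M * α ^ 2 ≤ R * α ^ 2 := by nlinarith [sq_nonneg (16 * α ^ 4 * M)]
    exact le_of_mul_le_mul_right this (by positivity)
  · set t := √R with ht
    have ht0 : 0 ≤ t := Real.sqrt_nonneg R
    have htt : t * t = R := Real.mul_self_sqrt (by linarith)
    have a1 : 4 * α / (α - 1) < t := Real.lt_sqrt_of_sq_lt hR2
    have a2 : (1 + 16 * α ^ 4 * M) / α < t :=
      Real.lt_sqrt_of_sq_lt (by rw [div_pow]; exact hR3)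
    rw [div_lt_iff₀ hα1] at a1
    rw [div_lt_iff₀ hα0] at a2
    have b : 4 * α * (1 + 16 * α ^ 4 * M) ≤ t * (α - 1) * (t * α) :=
      mul_le_mul a1.le a2.le (by positivity) (by positivity)
    have b' : 4 * (1 + 16 * α ^ 4 * M) * α ≤ (α - 1) * R * α := by
      rw [← htt]; linarith
    have b2 := le_of_mul_le_mul_right b' hα0
    have e1 : α ^ 2 * M ≤ α ^ 4 * M := by
      have : α ^ 2 ≤ α ^ 4 := by rw [h42]; nlinarith
      gcongr
    have e2 : 0 ≤ α ^ 4 * M := by positivity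
    linarith

/-- The characteristic data of a local solution launch a solution on the whole quadrant. -/
theorem exists_EFSol_Quad {R C M m₀ α : ℝ} (hα : 1 < α) (hC : 0 < C) (hM : 0 < M)
    (hm₀ : m₀ ∈ Icc 0 M) (hR1 : 1 ≤ R) (h1 : 16 * α * M ≤ R)
    (h2 : 1 + 8 * α ^ 2 * M ≤ (α - 1) * R) (h3 : 6 * α ^ 2 * C ^ 2 ≤ (α - 1) * M * R)
    {D : Set (ℝ × ℝ)} {r m φ : ℝ × ℝ → ℝ} (hsol : EFSol R D r m φ)
    (hic : CharIC R C M m₀ D r m φ) :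
    ∃ r' m' φ' : ℝ × ℝ → ℝ, EFSol R (Quad R) r' m' φ' ∧
      (∀ v ≥ R, r' (-R, v) = r (-R, v) ∧ m' (-R, v) = m (-R, v) ∧ φ' (-R, v) = φ (-R, v)) ∧
      (∀ u ≤ -R, r' (u, R) = r (u, R) ∧ m' (u, R) = m (u, R) ∧ φ' (u, R) = φ (u, R)) := by
  have hR : 0 < R := by linarith
  have two : (2 : WithTop ℕ∞) ≠ 0 := by norm_num
  have uD := uniqueDiffOn_of_relOpen hsol.relOpen
  have dr := hsol.hr.differentiableOn two
  have dm := hsol.hm.differentiableOn two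
  have dφ := hsol.hphi.differentiableOn two
  have drφ : DifferentiableOn ℝ (fun q => r q * φ q) D := dr.mul dφ
  -- the area radius on the two rays
  have rout : ∀ y, 0 ≤ y → r (-R, R + y) = R + y :=
    eq_of_hasDerivWithinAt (f := fun t => r (-R, R + t)) (h := fun _ => 1) continuousOn_const
      (fun y hy => by
        simpa only [hic.lam_one (R + y) (by linarith)] using hasDerivWithinAt_out hic.ray_out dr hy)
      (fun y _ => (hasDerivWithinAt_id y _).const_add R) (by simp [hic.r_corner])
  have rin : ∀ x, 0 ≤ x → r (-(R + x), R) = R + x :=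
    eq_of_hasDerivWithinAt (f := fun t => r (-(R + t), R)) (h := fun _ => 1) continuousOn_const
      (fun x hx => by
        simpa only [hic.nu_one (-(R + x)) (by linarith), neg_neg] using
          hasDerivWithinAt_in hic.ray_in dr hx)
      (fun x _ => (hasDerivWithinAt_id x _).const_add R) (by simp [hic.r_corner])
  -- data on the two rays
  set ψ₁ : ℝ → ℝ := fun y => (R + y) * φ (-R, R + y) with hψ₁
  set Ψ : ℝ → ℝ := fun x => (R + x) * φ (-(R + x), R) with hΨ
  set m₁ : ℝ → ℝ := fun y => m (-R, R + y) with hm₁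
  obtain ⟨ψ₁', ψ₁'', dψ₁, dψ₁', cψ₁''⟩ := exists_deriv_two (g := ψ₁)
    ((contDiffOn_const.add contDiffOn_id).mul (contDiffOn_out hic.ray_out hsol.hphi))
  obtain ⟨p₀, p₀', dΨ, dp₀, cp₀'⟩ := exists_deriv_two (g := Ψ)
    ((contDiffOn_const.add contDiffOn_id).mul (contDiffOn_in hic.ray_in hsol.hphi))
  obtain ⟨m₁', m₁'', dm₁, dm₁', -⟩ := exists_deriv_two (g := m₁)
    (contDiffOn_out hic.ray_out hsol.hm)
  have cm₁' : ContinuousOn m₁' (Ici 0) := fun x hx => (dm₁' x hx).continuousWithinAt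
  have cp₀ : ContinuousOn p₀ (Ici 0) := fun x hx => (dp₀ x hx).continuousWithinAt
  have dadd : ∀ y, HasDerivWithinAt (fun t => R + t) 1 (Ici 0) y :=
    fun y => (hasDerivWithinAt_id y _).const_add R
  have eψ₁' : ∀ y, 0 ≤ y → ψ₁' y = φ (-R, R + y) + (R + y) * pdv D φ (-R, R + y) := fun y hy => by
    have := hasDerivWithinAt_unique hy (dψ₁ y hy)
      ((dadd y).fun_mul (hasDerivWithinAt_out hic.ray_out dφ hy))
    rw [this, one_mul]
  have ep₀ : ∀ x, 0 ≤ x →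
      p₀ x = φ (-(R + x), R) - (R + x) * pdu D φ (-(R + x), R) := fun x hx => by
    have := hasDerivWithinAt_unique hx (dΨ x hx)
      ((dadd x).fun_mul (hasDerivWithinAt_in hic.ray_in dφ hx))
    rw [this]; ring
  have hcon : ∀ y, 0 ≤ y →
      m₁' y = 1 / 2 * (1 - 2 * m₁ y / (R + y)) * (ψ₁' y - ψ₁ y / (R + y)) ^ 2 := fun y hy => by
    have e := hsol.eq_mv _ (hic.ray_out (R + y) (by linarith))
    rw [hic.lam_one _ (by linarith), rout y hy, one_mul] at e
    have e' := hasDerivWithinAt_unique hy (dm₁ y hy) (hasDerivWithinAt_out hic.ray_out dm hy)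
    have : R + y ≠ 0 := by positivity
    rw [e', e, eψ₁' y hy]
    simp only [hψ₁, hm₁]
    congr 2
    field_simp
    ring
  have bp₀ : ∀ x, 0 ≤ x → |p₀ x| ≤ C / (R + x) ^ 2 := fun x hx => by
    have e := hasDerivWithinAt_unique hx (dΨ x hx)
      ((hasDerivWithinAt_in hic.ray_in drφ hx).congr
        (fun t ht => by simp only [hΨ, rin t ht]) (by simp only [hΨ, rin x hx]))
    rw [e, abs_neg]
    simpa only [neg_sq] using hic.durphi_bound (-(R + x)) (by linarith)
  have bψ₁ : ∀ y, 0 ≤ y → |ψ₁ y| ≤ C := fun y hy => by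
    simpa only [rout y hy] using hic.rphi_bound (R + y) (by linarith)
  have mM : ∀ y, 0 ≤ y → m₁ y ≤ M := fun y hy => hic.m_bound_out _ (by linarith)
  -- on the outgoing ray the mass is nondecreasing, hence nonnegative
  have bm₁ : ∀ y, 0 ≤ y → 0 ≤ m₁ y ∧ m₁ y ≤ M := fun y hy => by
    refine ⟨?_, mM y hy⟩
    have e := (PX.of_x cm₁' dm₁).ftc (mem_QQ hy (le_refl (0 : ℝ)))
    have i0 : 0 ≤ intX (fun p => m₁' p.1) (y, 0) :=
      intervalIntegral.integral_nonneg hy fun t ht => by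
        have s0 : 0 < R + t := by linarith [ht.1]
        have : 2 * m₁ t / (R + t) ≤ 1 := by
          rw [div_le_one s0]
          nlinarith [mM t ht.1, ht.1]
        change 0 ≤ m₁' t
        rw [hcon t ht.1]
        have : 0 ≤ 1 - 2 * m₁ t / (R + t) := by linarith
        positivity
    have m0 : m₁ 0 = m₀ := by simp [hm₁, hic.m_corner]
    have e' : m₁ y = m₁ 0 + intX (fun p => m₁' p.1) (y, 0) := e
    linarith [hm₀.1]
  obtain ⟨σ, lam, p, q, μ, ψ, ρ, N, Z, θ, hpos, hrx, hry, hσ, hl, hψx, hψy, eN, eZ, eθ, hZ, hθ,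
    hmx, hmy, Yl, Xσ, XZ, Yθ, cr, cψ, cm, bx, bY⟩ := exists_global hR hM hC hα h1 h2 h3 dp₀ cp₀'
      dm₁ cm₁' dψ₁ dψ₁' cψ₁'' bp₀ bm₁ bψ₁ hcon
  obtain ⟨-, c2, c3, c4⟩ := bY 0 le_rfl
  have edge := edge_values (μ := fun x => m (-(R + x), R)) (Ψ := Ψ) hR cp₀ hrx hψx eZ hmx bx
    (by rw [c4, add_zero]) (by rw [c3]; simp [hψ₁, hΨ]) (by rw [c2]; simp [hm₁]) dΨ
    fun x hx => by
      refine (hasDerivWithinAt_in hic.ray_in dm hx).congr_deriv ?_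
      have e := hsol.eq_mu _ (hic.ray_in (-(R + x)) (by linarith))
      rw [hic.nu_one _ (by linarith), rin x hx, neg_one_mul] at e
      have : R + x ≠ 0 := by positivity
      rw [e, ep₀ x hx]
      simp only [hΨ]
      congr 1
      field_simp
      ring
  refine ⟨_, _, _, EFSol.of_QQ R hpos hrx hry hσ hl hψx hψy eN eZ eθ hZ hθ hmx hmy Yl Xσ XZ Yθ
    cr cψ cm, fun v hv => ?_, fun u hu => ?_⟩
  · obtain ⟨y, rfl⟩ : ∃ y, v = R + y := ⟨v - R, by ring⟩
    have hy : 0 ≤ y := by linarith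
    have e : toQQ R (-R, R + y) = (0, y) := by simp [toQQ]
    obtain ⟨-, b2, b3, b4⟩ := bY y hy
    have : R + y ≠ 0 := by positivity
    simp only [e, b2, b3, b4, rout y hy, hψ₁, hm₁, true_and]
    field_simp
  · obtain ⟨x, rfl⟩ : ∃ x, u = -(R + x) := ⟨-u - R, by ring⟩
    have hx : 0 ≤ x := by linarith
    have e : toQQ R (-(R + x), R) = (x, 0) := by simp [toQQ]
    obtain ⟨b1, b2, b3⟩ := edge x hx
    have : R + x ≠ 0 := by positivity
    simp only [e, b1, b2, b3, rin x hx, hΨ, true_and]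
    field_simp

/-! ### The maximal development -/

/-- Global existence for the characteristic problem `Γ`.  For
`α > 1` and `R` large enough (as quantified below), the maximal development of
characteristic initial conditions with parameters `C`, `M`, `m₀` is the whole
quadrant: `D = Q_R = (-∞,-R] × [R,∞)`. -/
theorem global_existence (R C M m₀ α : ℝ) (hα : 1 < α) (hC : 0 < C)
    (hM : 0 < M) (hm₀ : m₀ ∈ Icc 0 M)
    (hR1 : 1 ≤ R) (hR2 : R > (4 * α / (α - 1)) ^ 2)
    (hR3 : R > (1 + 16 * α ^ 4 * M) ^ 2 / α ^ 2)
    (hR4 : R > 8 * α ^ 2 * M / Real.log α)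
    (hR5 : 6 * α ^ 2 * C ^ 2 < (α - 1) * M * R)
    (hR6 : R > 4 * α ^ 2 * M / (α - 1))
    (D : Set (ℝ × ℝ)) (r m φ : ℝ × ℝ → ℝ) (hsol : EFSol R D r m φ)
    (hic : CharIC R C M m₀ D r m φ) (hmax : IsMaximalDev R D r m φ) :
    D = Quad R := by
  obtain ⟨h1, h2⟩ := largeness hα hM hR1 hR2 hR3
  obtain ⟨r', m', φ', hs, hout, hin⟩ := exists_EFSol_Quad hα hC hM hm₀ hR1 h1 h2 hR5.le hsol hic
  exact hsol.subset.antisymm (hmax (Quad R) r' m' φ' (fun _ _ _ hq _ _ => hq)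
    (fun v hv => ⟨(le_refl (-R) : -R ≤ -R), hv⟩) (fun u hu => ⟨hu, (le_refl R : R ≤ R)⟩) hs hout hin).1
end

section
/- Global estimates for the characteristic problem Γ: Fix α > 1 and suppose R satisfies R ≥ 1, R > (4α/(α−1))², R > α⁻²(1 + 16α⁴M)², R > 8α²M/log α, 6α²C² < (α−1)MR, and R > 4α²M/(α−1). Let (r, m, φ) be a solution on D satisfying the characteristic initial conditions with parameters C, M, m₀. Then throughout D the following estimates hold: |rφ| ≤ αC; |νφ + ζ| ≤ (1 + 16α⁴M)·C/u²; −α ≤ ν ≤ −1; 1 ≤ λ ≤ α; 1 − μ ≥ 1/(2α); r ≥ R; and m ≤ αM. -/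
/-! The proof is a continuity (bootstrap) argument. Starting from the corner `(-R, R)`, both `-u` and
`v` increase, and the strict inequalities `λ > 0`, `ν < 0`, `μ < 1`, `m < αM`, `|rφ| < αC`, collected
in `Boot`, are propagated over the rectangle `[u, -R] × [R, v]`.

Assume they hold on this rectangle except possibly at the vertex `(u, v)`. Then the mass is monotone
along both null directions, so `m ≥ 0`; the wave equation for `r` then gives `λ ≥ 1`, `ν ≤ -1`, and
`r ≥ -u ≥ R`. The remaining bounds come from integrating along null segments, where every
integrand is compared with an exact derivative:

* `log λ` and `log (-ν)` change by at most the total variation of `4α²M/r`, hence by at most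
  `log α` (`lam_le`, `nu_ge`);
* `∂ᵥ(νφ + ζ) = φ ∂ᵥν` is dominated by the derivative of `-2α⁴MC/r²` (`w_bound`);
* `∂ᵤ(rφ) = νφ + ζ` is then integrable in `u`, giving `|rφ| < αC` (`rphi_lt`);
* `-∂ᵤm ≤ (νφ + ζ)² + |ν|φ²`, giving `m < αM` (`m_lt`).

Only the points strictly inside the segments enter, so the strict inequalities extend to the vertex
(`boot_of_below`). A bad point minimizing `v - u` therefore cannot exist (`boot_all`). -/


open Set Real

open Set Real


/-! ### One-dimensional calculus and restriction to null segments -/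

lemma mono_seg {g g' : ℝ → ℝ} {a b : ℝ} (hab : a ≤ b) (hc : ContinuousOn g (Icc a b))
    (hd : ∀ s ∈ Ioo a b, HasDerivAt g (g' s) s) (hn : ∀ s ∈ Ioo a b, 0 ≤ g' s) :
    g a ≤ g b := by
  have h := monotoneOn_of_hasDerivWithinAt_nonneg (f := g) (f' := g') (convex_Icc a b) hc
    (fun x hx => (hd x (by simpa using hx)).hasDerivWithinAt)
    (fun x hx => hn x (by simpa using hx))
  exact h (left_mem_Icc.2 hab) (right_mem_Icc.2 hab) hab

lemma anti_seg {g g' : ℝ → ℝ} {a b : ℝ} (hab : a ≤ b) (hc : ContinuousOn g (Icc a b))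
    (hd : ∀ s ∈ Ioo a b, HasDerivAt g (g' s) s) (hn : ∀ s ∈ Ioo a b, g' s ≤ 0) :
    g b ≤ g a := by
  have h := mono_seg (g := fun s => -g s) (g' := fun s => -g' s) hab hc.neg
    (fun s hs => (hd s hs).neg) (fun s hs => by linarith [hn s hs])
  linarith

/-- The strict inequalities that are propagated by the continuity argument. -/
def Boot (α C M : ℝ) (D : Set (ℝ × ℝ)) (r m φ : ℝ × ℝ → ℝ) (q : ℝ × ℝ) : Prop :=
  0 < pdv D r q ∧ pdu D r q < 0 ∧ 0 < 1 - 2 * m q / r q ∧ m q < α * M ∧ |r q * φ q| < α * C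

/-- `Boot` holds at every point of the rectangle spanned by the corner `(-R, R)` and `p`,
except possibly at `p` itself. -/
def BootBelow (R α C M : ℝ) (D : Set (ℝ × ℝ)) (r m φ : ℝ × ℝ → ℝ) (p : ℝ × ℝ) : Prop :=
  ∀ q ∈ Quad R, p.1 ≤ q.1 → q.2 ≤ p.2 → q ≠ p → Boot α C M D r m φ q

/-- The smallness conditions on the parameters. -/
structure Params (R C M α : ℝ) : Prop where
  hα : 1 < α
  hC : 0 < C
  hM : 0 < M
  hR1 : 1 ≤ R
  hR2 : R > (4 * α / (α - 1)) ^ 2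
  hR3 : R > (1 + 16 * α ^ 4 * M) ^ 2 / α ^ 2
  hR4 : R > 8 * α ^ 2 * M / Real.log α
  hR5 : 6 * α ^ 2 * C ^ 2 < (α - 1) * M * R
  hR6 : R > 4 * α ^ 2 * M / (α - 1)

section

variable {R C M m₀ α : ℝ} {D : Set (ℝ × ℝ)} {r m φ f : ℝ × ℝ → ℝ} {p : ℝ × ℝ} {u v : ℝ}

lemma EFSol.uniqueDiffOn (hsol : EFSol R D r m φ) : UniqueDiffOn ℝ D := by
  obtain ⟨U, hU, rfl⟩ := hsol.relOpen
  rw [inter_comm]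
  exact ((uniqueDiffOn_Iic _).prod (uniqueDiffOn_Ici _)).inter hU

lemma EFSol.diff_fderiv (hsol : EFSol R D r m φ) (hf : ContDiffOn ℝ 2 f D) (e : ℝ × ℝ) :
    DifferentiableOn ℝ (fun q => fderivWithin ℝ f D q e) D := by
  have h : ContDiffOn ℝ 1 (fderivWithin ℝ f D) D :=
    hf.fderivWithin hsol.uniqueDiffOn (by norm_num)
  exact (h.differentiableOn (by norm_num)).clm_apply (differentiableOn_const e)

lemma EFSol.diff_pdu (hsol : EFSol R D r m φ) (hf : ContDiffOn ℝ 2 f D) :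
    DifferentiableOn ℝ (pdu D f) D := hsol.diff_fderiv hf (1, 0)

lemma EFSol.diff_pdv (hsol : EFSol R D r m φ) (hf : ContDiffOn ℝ 2 f D) :
    DifferentiableOn ℝ (pdv D f) D := hsol.diff_fderiv hf (0, 1)

lemma EFSol.dr (hsol : EFSol R D r m φ) : DifferentiableOn ℝ r D :=
  hsol.hr.differentiableOn (by norm_num)

lemma EFSol.dm (hsol : EFSol R D r m φ) : DifferentiableOn ℝ m D :=
  hsol.hm.differentiableOn (by norm_num)

lemma EFSol.dphi (hsol : EFSol R D r m φ) : DifferentiableOn ℝ φ D :=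
  hsol.hphi.differentiableOn (by norm_num)

lemma pdu_mul (hsol : EFSol R D r m φ) (hp : p ∈ D) :
    pdu D (fun q => r q * φ q) p = pdu D r p * φ p + r p * pdu D φ p := by
  have h := fderivWithin_mul (hsol.uniqueDiffOn p hp) (hsol.dr p hp) (hsol.dphi p hp)
  unfold pdu
  change fderivWithin ℝ (r * φ) D p (1, 0) = _
  rw [h]
  simp
  ring

lemma EFSol.bds (hsol : EFSol R D r m φ) (hp : (u, v) ∈ D) : u ≤ -R ∧ R ≤ v := by
  have h := hsol.subset hp
  exact ⟨h.1, h.2⟩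

lemma seg_u (hsol : EFSol R D r m φ) (hic : CharIC R C M m₀ D r m φ) (hp : (u, v) ∈ D)
    {s : ℝ} (hs : s ∈ Icc u (-R)) : (s, v) ∈ D :=
  hic.past _ hp _ ⟨hs.2, (hsol.bds hp).2⟩ hs.1 le_rfl

lemma seg_v (hsol : EFSol R D r m φ) (hic : CharIC R C M m₀ D r m φ) (hp : (u, v) ∈ D)
    {t : ℝ} (ht : t ∈ Icc R v) : (u, t) ∈ D :=
  hic.past _ hp _ ⟨(hsol.bds hp).1, ht.1⟩ le_rfl ht.2

lemma cont_u (hsol : EFSol R D r m φ) (hic : CharIC R C M m₀ D r m φ) (hp : (u, v) ∈ D)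
    (hf : DifferentiableOn ℝ f D) : ContinuousOn (fun s => f (s, v)) (Icc u (-R)) :=
  hf.continuousOn.comp (by fun_prop) (fun _ hs => seg_u hsol hic hp hs)

lemma cont_v (hsol : EFSol R D r m φ) (hic : CharIC R C M m₀ D r m φ) (hp : (u, v) ∈ D)
    (hf : DifferentiableOn ℝ f D) : ContinuousOn (fun t => f (u, t)) (Icc R v) :=
  hf.continuousOn.comp (by fun_prop) (fun _ ht => seg_v hsol hic hp ht)

lemma deriv_u (hsol : EFSol R D r m φ) (hic : CharIC R C M m₀ D r m φ) (hp : (u, v) ∈ D)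
    (hf : DifferentiableOn ℝ f D) {s : ℝ} (hs : s ∈ Ioo u (-R)) :
    HasDerivAt (fun s => f (s, v)) (pdu D f (s, v)) s := by
  have h1 := (hf (s, v) (seg_u hsol hic hp (Ioo_subset_Icc_self hs))).hasFDerivWithinAt
  have h2 : HasDerivWithinAt (fun x : ℝ => (x, v)) ((1 : ℝ), (0 : ℝ)) (Icc u (-R)) s :=
    ((hasDerivAt_id s).prodMk (hasDerivAt_const s v)).hasDerivWithinAt
  exact (h1.comp_hasDerivWithinAt s h2 (fun x hx => seg_u hsol hic hp hx)).hasDerivAt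
    (Icc_mem_nhds hs.1 hs.2)

lemma deriv_v (hsol : EFSol R D r m φ) (hic : CharIC R C M m₀ D r m φ) (hp : (u, v) ∈ D)
    (hf : DifferentiableOn ℝ f D) {t : ℝ} (ht : t ∈ Ioo R v) :
    HasDerivAt (fun t => f (u, t)) (pdv D f (u, t)) t := by
  have h1 := (hf (u, t) (seg_v hsol hic hp (Ioo_subset_Icc_self ht))).hasFDerivWithinAt
  have h2 : HasDerivWithinAt (fun x : ℝ => (u, x)) ((0 : ℝ), (1 : ℝ)) (Icc R v) t :=
    ((hasDerivAt_const t u).prodMk (hasDerivAt_id t)).hasDerivWithinAt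
  exact (h1.comp_hasDerivWithinAt t h2 (fun x hx => seg_v hsol hic hp hx)).hasDerivAt
    (Icc_mem_nhds ht.1 ht.2)

lemma BootBelow.below (hb : BootBelow R α C M D r m φ (u, v)) {u' v' : ℝ} (hu : u ≤ u')
    (hv : v' ≤ v) : BootBelow R α C M D r m φ (u', v') := by
  intro q hq h1 h2 hne
  refine hb q hq (hu.trans h1) (h2.trans hv) ?_
  rintro rfl
  apply hne
  simp only at h1 h2
  rw [le_antisymm hu h1, le_antisymm hv h2]

lemma BootBelow.at_u (hb : BootBelow R α C M D r m φ (u, v)) (hv : R ≤ v) {s : ℝ}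
    (hs : s ∈ Ioo u (-R)) : Boot α C M D r m φ (s, v) := by
  refine hb _ ⟨hs.2.le, hv⟩ hs.1.le le_rfl ?_
  intro h
  exact hs.1.ne' (congrArg Prod.fst h)

lemma BootBelow.at_v (hb : BootBelow R α C M D r m φ (u, v)) (hu : u ≤ -R) {t : ℝ}
    (ht : t ∈ Ioo R v) : Boot α C M D r m φ (u, t) := by
  refine hb _ ⟨hu, ht.1.le⟩ le_rfl ht.2.le ?_
  intro h
  exact ht.2.ne (congrArg Prod.snd h)

/-! ### Signs: monotonicity of mass, null derivatives and radius -/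

lemma m_nonneg (hm₀ : 0 ≤ m₀) (hsol : EFSol R D r m φ) (hic : CharIC R C M m₀ D r m φ)
    (hp : (u, v) ∈ D) (hb : BootBelow R α C M D r m φ (u, v)) : 0 ≤ m (u, v) := by
  obtain ⟨hu, hv⟩ := hsol.bds hp
  have hq := hic.ray_out v hv
  have h1 : m (-R, v) ≤ m (u, v) := by
    refine anti_seg (g := fun s => m (s, v)) hu (cont_u hsol hic hp hsol.dm)
      (fun s hs => deriv_u hsol hic hp hsol.dm hs) fun s hs => ?_
    obtain ⟨-, b2, b3, -, -⟩ := hb.at_u hv hs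
    have e := hsol.eq_mu _ (seg_u hsol hic hp (Ioo_subset_Icc_self hs))
    have e2 : 0 ≤ pdu D r (s, v) * pdu D m (s, v) := by rw [e]; positivity
    by_contra hcon
    push Not at hcon
    nlinarith
  have h2 : m (-R, R) ≤ m (-R, v) := by
    refine mono_seg (g := fun t => m (-R, t)) hv (cont_v hsol hic hq hsol.dm)
      (fun t ht => deriv_v hsol hic hq hsol.dm ht) fun t ht => ?_
    obtain ⟨b1, -, b3, -, -⟩ := (hb.below hu le_rfl).at_v le_rfl ht
    have e := hsol.eq_mv _ (seg_v hsol hic hq (Ioo_subset_Icc_self ht))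
    have e2 : 0 ≤ pdv D r (-R, t) * pdv D m (-R, t) := by rw [e]; positivity
    exact nonneg_of_mul_nonneg_right e2 b1
  rw [hic.m_corner] at h2
  linarith

lemma lam_ge (hm₀ : 0 ≤ m₀) (hsol : EFSol R D r m φ) (hic : CharIC R C M m₀ D r m φ)
    (hp : (u, v) ∈ D) (hb : BootBelow R α C M D r m φ (u, v)) : 1 ≤ pdv D r (u, v) := by
  obtain ⟨hu, hv⟩ := hsol.bds hp
  rw [← hic.lam_one v hv]
  refine anti_seg (g := fun s => pdv D r (s, v)) hu (cont_u hsol hic hp (hsol.diff_pdv hsol.hr))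
    (fun s hs => deriv_u hsol hic hp (hsol.diff_pdv hsol.hr) hs) fun s hs => ?_
  obtain ⟨b1, b2, b3, -, -⟩ := hb.at_u hv hs
  have hD := seg_u hsol hic hp (Ioo_subset_Icc_self hs)
  have hm := m_nonneg hm₀ hsol hic hD (hb.below hs.1.le le_rfl)
  have hr := hsol.rpos _ hD
  refine (hsol.eq_lam _ hD).le.trans ?_
  refine mul_nonpos_of_nonpos_of_nonneg (mul_nonpos_of_nonneg_of_nonpos b1.le ?_) (by positivity)
  exact div_nonpos_of_nonpos_of_nonneg (by linarith) b3.le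

lemma nu_le (hm₀ : 0 ≤ m₀) (hsol : EFSol R D r m φ) (hic : CharIC R C M m₀ D r m φ)
    (hp : (u, v) ∈ D) (hb : BootBelow R α C M D r m φ (u, v)) : pdu D r (u, v) ≤ -1 := by
  obtain ⟨hu, hv⟩ := hsol.bds hp
  rw [← hic.nu_one u hu]
  refine anti_seg (g := fun t => pdu D r (u, t)) hv (cont_v hsol hic hp (hsol.diff_pdu hsol.hr))
    (fun t ht => deriv_v hsol hic hp (hsol.diff_pdu hsol.hr) ht) fun t ht => ?_
  obtain ⟨b1, b2, b3, -, -⟩ := hb.at_v hu ht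
  have hD := seg_v hsol hic hp (Ioo_subset_Icc_self ht)
  have hm := m_nonneg hm₀ hsol hic hD (hb.below le_rfl ht.2.le)
  have hr := hsol.rpos _ hD
  refine (hsol.eq_nu _ hD).le.trans ?_
  refine mul_nonpos_of_nonpos_of_nonneg (mul_nonpos_of_nonpos_of_nonneg b2.le ?_) (by positivity)
  exact div_nonneg (by linarith) b3.le

lemma r_ray (hsol : EFSol R D r m φ) (hic : CharIC R C M m₀ D r m φ) (hu : u ≤ -R) :
    r (u, R) = -u := by
  have hp := hic.ray_in u hu
  have hc : ContinuousOn (fun s => r (s, R) + s) (Icc u (-R)) :=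
    (cont_u hsol hic hp hsol.dr).add continuousOn_id
  have hd : ∀ s ∈ Ioo u (-R), HasDerivAt (fun s => r (s, R) + s) 0 s := fun s hs => by
    have h := (deriv_u hsol hic hp hsol.dr hs).add (hasDerivAt_id s)
    rw [hic.nu_one s hs.2.le] at h
    exact h.congr_deriv (by norm_num)
  have h1 := mono_seg hu hc hd (fun _ _ => le_rfl)
  have h2 := anti_seg hu hc hd (fun _ _ => le_rfl)
  simp only [hic.r_corner] at h1 h2
  linarith

lemma r_ge (hsol : EFSol R D r m φ) (hic : CharIC R C M m₀ D r m φ)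
    (hp : (u, v) ∈ D) (hb : BootBelow R α C M D r m φ (u, v)) : -u ≤ r (u, v) := by
  obtain ⟨hu, hv⟩ := hsol.bds hp
  rw [← r_ray hsol hic hu]
  exact mono_seg (g := fun t => r (u, t)) hv (cont_v hsol hic hp hsol.dr)
    (fun t ht => deriv_v hsol hic hp hsol.dr ht) fun t ht => (hb.at_v hu ht).1.le

/-! ### Quantitative bounds -/

lemma mu_bound (hP : Params R C M α) (hr : R ≤ r p) (hm : m p ≤ α * M) :
    1 / (2 * α) ≤ 1 - 2 * m p / r p := by
  have hα := hP.hα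
  have hM := hP.hM
  have hR1 := hP.hR1
  have hR6 := hP.hR6
  rw [gt_iff_lt, div_lt_iff₀ (by linarith)] at hR6
  have hrp : 0 < r p := by linarith
  have h1 : 1 - 2 * m p / r p = (r p - 2 * m p) / r p := by field_simp
  rw [h1, div_le_div_iff₀ (by linarith) hrp]
  -- `(2α - 1) r ≥ (α - 1) R ≥ 4α² M ≥ 4α m`
  have h2 : R * (α - 1) ≤ r p * (α - 1) := by gcongr
  have h3 : α * m p ≤ α * (α * M) := by gcongr
  nlinarith [mul_pos hrp (by linarith : 0 < α)]

/-- The integrand common to the equations for `log λ` and `log (-ν)`. -/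
lemma integrand_bound (hP : Params R C M α) (hm : 0 ≤ m p) (hr : R ≤ r p)
    (hm' : m p ≤ α * M) :
    2 / (1 - 2 * m p / r p) * (m p / r p ^ 2) ≤ 4 * α ^ 2 * M / r p ^ 2 := by
  have hα := hP.hα
  have hM := hP.hM
  have hrp : 0 < r p := by linarith [hP.hR1]
  have h := mu_bound (m := m) hP hr hm'
  have hα' : 0 < 1 / (2 * α) := by positivity
  have h1 : 2 / (1 - 2 * m p / r p) ≤ 4 * α := by
    rw [div_le_iff₀ (by linarith)]
    calc (2 : ℝ) = 4 * α * (1 / (2 * α)) := by field_simp; norm_num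
      _ ≤ _ := by gcongr
  calc 2 / (1 - 2 * m p / r p) * (m p / r p ^ 2) ≤ 4 * α * (α * M / r p ^ 2) := by gcongr
    _ = _ := by ring

lemma K_le (hP : Params R C M α) (hr : R ≤ r p) : 4 * α ^ 2 * M / r p ≤ Real.log α := by
  have hα := hP.hα
  have hM := hP.hM
  have hR1 := hP.hR1
  have hR4 := hP.hR4
  have hl : 0 < Real.log α := Real.log_pos hα
  rw [gt_iff_lt, div_lt_iff₀ hl] at hR4
  rw [div_le_iff₀ (by linarith)]
  have h2 : R * Real.log α ≤ r p * Real.log α := by gcongr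
  have : 0 < α ^ 2 * M := by positivity
  linarith

/-- The function `log λ + 4α²M/r` is nondecreasing in `u`. -/
lemma lam_le (hP : Params R C M α) (hm₀ : 0 ≤ m₀) (hsol : EFSol R D r m φ)
    (hic : CharIC R C M m₀ D r m φ) (hp : (u, v) ∈ D)
    (hb : BootBelow R α C M D r m φ (u, v)) : pdv D r (u, v) ≤ α := by
  obtain ⟨hu, hv⟩ := hsol.bds hp
  have hα := hP.hα
  have hM := hP.hM
  have hR1 := hP.hR1
  have hlam : ∀ s ∈ Icc u (-R), 1 ≤ pdv D r (s, v) := fun s hs =>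
    lam_ge hm₀ hsol hic (seg_u hsol hic hp hs) (hb.below hs.1 le_rfl)
  have hrr : ∀ s ∈ Icc u (-R), R ≤ r (s, v) := fun s hs => by
    have := r_ge hsol hic (seg_u hsol hic hp hs) (hb.below hs.1 le_rfl)
    linarith [hs.2]
  have h := mono_seg
    (g := fun s => Real.log (pdv D r (s, v)) + 4 * α ^ 2 * M / r (s, v))
    (g' := fun s => pdu D (fun q => pdv D r q) (s, v) / pdv D r (s, v) +
      (0 * r (s, v) - 4 * α ^ 2 * M * pdu D r (s, v)) / r (s, v) ^ 2) hu
    (((cont_u hsol hic hp (hsol.diff_pdv hsol.hr)).log fun s hs => by linarith [hlam s hs]).add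
      (continuousOn_const.div (cont_u hsol hic hp hsol.dr) fun s hs => by linarith [hrr s hs]))
    (fun s hs => by
      have hs' := Ioo_subset_Icc_self hs
      exact ((deriv_u hsol hic hp (hsol.diff_pdv hsol.hr) hs).log (by linarith [hlam s hs'])).add
        ((hasDerivAt_const s _).div (deriv_u hsol hic hp hsol.dr hs) (by linarith [hrr s hs'])))
    (fun s hs => by
      have hs' := Ioo_subset_Icc_self hs
      obtain ⟨b1, b2, b3, b4, -⟩ := hb.at_u hv hs
      have hD := seg_u hsol hic hp hs'
      have hm := m_nonneg hm₀ hsol hic hD (hb.below hs.1.le le_rfl)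
      have hi := integrand_bound hP hm (hrr s hs') b4.le
      rw [hsol.eq_lam _ hD]
      have e : pdv D r (s, v) * (2 * pdu D r (s, v) / (1 - 2 * m (s, v) / r (s, v))) *
          (m (s, v) / r (s, v) ^ 2) / pdv D r (s, v) +
          (0 * r (s, v) - 4 * α ^ 2 * M * pdu D r (s, v)) / r (s, v) ^ 2 =
          (-pdu D r (s, v)) * (4 * α ^ 2 * M / r (s, v) ^ 2 -
            2 / (1 - 2 * m (s, v) / r (s, v)) * (m (s, v) / r (s, v) ^ 2)) := by
        have := b1.ne'
        rw [mul_assoc, mul_div_cancel_left₀ _ this]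
        ring
      rw [e]
      exact mul_nonneg (by linarith) (by linarith))
  simp only [hic.lam_one v hv, Real.log_one] at h
  have hend := K_le (p := (-R, v)) hP (hrr (-R) ⟨hu, le_rfl⟩)
  have hpos : 0 ≤ 4 * α ^ 2 * M / r (u, v) := by
    have := hsol.rpos _ hp
    positivity
  have h1 := hlam u ⟨le_rfl, hu⟩
  exact (Real.log_le_log_iff (by linarith) (by linarith)).1 (by linarith)

/-- The function `log (-ν) + 4α²M/r` is nonincreasing in `v`. -/
lemma nu_ge (hP : Params R C M α) (hm₀ : 0 ≤ m₀) (hsol : EFSol R D r m φ)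
    (hic : CharIC R C M m₀ D r m φ) (hp : (u, v) ∈ D)
    (hb : BootBelow R α C M D r m φ (u, v)) : -α ≤ pdu D r (u, v) := by
  obtain ⟨hu, hv⟩ := hsol.bds hp
  have hα := hP.hα
  have hM := hP.hM
  have hR1 := hP.hR1
  have hnu : ∀ t ∈ Icc R v, pdu D r (u, t) ≤ -1 := fun t ht =>
    nu_le hm₀ hsol hic (seg_v hsol hic hp ht) (hb.below le_rfl ht.2)
  have hrr : ∀ t ∈ Icc R v, R ≤ r (u, t) := fun t ht => by
    have := r_ge hsol hic (seg_v hsol hic hp ht) (hb.below le_rfl ht.2)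
    linarith
  have h := anti_seg
    (g := fun t => Real.log (-pdu D r (u, t)) + 4 * α ^ 2 * M / r (u, t))
    (g' := fun t => -pdv D (fun q => pdu D r q) (u, t) / -pdu D r (u, t) +
      (0 * r (u, t) - 4 * α ^ 2 * M * pdv D r (u, t)) / r (u, t) ^ 2) hv
    (((cont_v hsol hic hp (hsol.diff_pdu hsol.hr)).neg.log
        fun t ht => (by linarith [hnu t ht] : -pdu D r (u, t) ≠ 0)).add
      (continuousOn_const.div (cont_v hsol hic hp hsol.dr) fun t ht => by linarith [hrr t ht]))
    (fun t ht => by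
      have ht' := Ioo_subset_Icc_self ht
      exact ((deriv_v hsol hic hp (hsol.diff_pdu hsol.hr) ht).neg.log
          (by linarith [hnu t ht'] : -pdu D r (u, t) ≠ 0)).add
        ((hasDerivAt_const t _).div (deriv_v hsol hic hp hsol.dr ht) (by linarith [hrr t ht'])))
    (fun t ht => by
      have ht' := Ioo_subset_Icc_self ht
      obtain ⟨b1, b2, b3, b4, -⟩ := hb.at_v hu ht
      have hD := seg_v hsol hic hp ht'
      have hm := m_nonneg hm₀ hsol hic hD (hb.below le_rfl ht.2.le)
      have hi := integrand_bound hP hm (hrr t ht') b4.le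
      rw [hsol.eq_nu _ hD]
      have e : -(pdu D r (u, t) * (2 * pdv D r (u, t) / (1 - 2 * m (u, t) / r (u, t))) *
          (m (u, t) / r (u, t) ^ 2)) / -pdu D r (u, t) +
          (0 * r (u, t) - 4 * α ^ 2 * M * pdv D r (u, t)) / r (u, t) ^ 2 =
          -(pdv D r (u, t) * (4 * α ^ 2 * M / r (u, t) ^ 2 -
            2 / (1 - 2 * m (u, t) / r (u, t)) * (m (u, t) / r (u, t) ^ 2))) := by
        have := b2.ne
        rw [neg_div_neg_eq, mul_assoc, mul_div_cancel_left₀ _ this]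
        ring
      rw [e]
      exact neg_nonpos.2 (mul_nonneg b1.le (by linarith)))
  simp only [hic.nu_one u hu, neg_neg, Real.log_one] at h
  have hend := K_le (p := (u, R)) hP (hrr R ⟨le_rfl, hv⟩)
  have hpos : 0 ≤ 4 * α ^ 2 * M / r (u, v) := by
    have := hsol.rpos _ hp
    positivity
  have h1 := hnu v ⟨hv, le_rfl⟩
  have := (Real.log_le_log_iff (x := -pdu D r (u, v)) (y := α) (by linarith) (by linarith)).1
    (by linarith)
  linarith

/-- A pointwise bound `|g'| ≤ -h'` integrates to `|g b - g a| ≤ h a - h b`. -/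
lemma abs_seg {g g' h h' : ℝ → ℝ} {a b : ℝ} (hab : a ≤ b) (hc : ContinuousOn g (Icc a b))
    (hch : ContinuousOn h (Icc a b))
    (hd : ∀ s ∈ Ioo a b, HasDerivAt g (g' s) s) (hdh : ∀ s ∈ Ioo a b, HasDerivAt h (h' s) s)
    (hn : ∀ s ∈ Ioo a b, |g' s| ≤ -h' s) : |g b - g a| ≤ h a - h b := by
  have h1 := anti_seg hab (hc.add hch) (fun s hs => (hd s hs).add (hdh s hs))
    (fun s hs => by linarith [(abs_le.1 (hn s hs)).2])
  have h2 := mono_seg hab (hc.sub hch) (fun s hs => (hd s hs).sub (hdh s hs))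
    (fun s hs => by linarith [(abs_le.1 (hn s hs)).1])
  simp only [Pi.add_apply, Pi.sub_apply] at h1 h2
  rw [abs_le]
  constructor <;> linarith

/-- The field equations give `∂ᵥ(νφ + ζ) = φ ∂ᵥν`, of size at most `4α⁴MC λ/r³`, which is the
`v`-derivative of `-2α⁴MC/r²`. -/
lemma w_bound (hP : Params R C M α) (hm₀ : 0 ≤ m₀) (hsol : EFSol R D r m φ)
    (hic : CharIC R C M m₀ D r m φ) (hp : (u, v) ∈ D)
    (hb : BootBelow R α C M D r m φ (u, v)) :
    |pdu D r (u, v) * φ (u, v) + r (u, v) * pdu D φ (u, v)|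
      ≤ (1 + 16 * α ^ 4 * M) * C / u ^ 2 := by
  obtain ⟨hu, hv⟩ := hsol.bds hp
  have hα := hP.hα
  have hM := hP.hM
  have hC := hP.hC
  have hR1 := hP.hR1
  have hrr : ∀ t ∈ Icc R v, R ≤ r (u, t) := fun t ht => by
    have := r_ge hsol hic (seg_v hsol hic hp ht) (hb.below le_rfl ht.2)
    linarith
  have hz : DifferentiableOn ℝ (fun q => r q * pdu D φ q) D := hsol.dr.mul (hsol.diff_pdu hsol.hphi)
  have h := abs_seg
    (g := fun t => pdu D r (u, t) * φ (u, t) + r (u, t) * pdu D φ (u, t))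
    (g' := fun t => pdv D (fun q => pdu D r q) (u, t) * φ (u, t) +
      pdu D r (u, t) * pdv D φ (u, t) + pdv D (fun q => r q * pdu D φ q) (u, t))
    (h := fun t => 2 * α ^ 4 * M * C / r (u, t) ^ 2)
    (h' := fun t => (0 * r (u, t) ^ 2 - 2 * α ^ 4 * M * C *
      ((2 : ℕ) * r (u, t) ^ (2 - 1) * pdv D r (u, t))) / (r (u, t) ^ 2) ^ 2) hv
    (((cont_v hsol hic hp (hsol.diff_pdu hsol.hr)).mul (cont_v hsol hic hp hsol.dphi)).add
      (cont_v hsol hic hp hz))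
    (continuousOn_const.div ((cont_v hsol hic hp hsol.dr).pow 2) fun t ht => by
      have : 0 < r (u, t) := by linarith [hrr t ht]
      exact (pow_pos this 2).ne')
    (fun t ht => ((deriv_v hsol hic hp (hsol.diff_pdu hsol.hr) ht).mul
      (deriv_v hsol hic hp hsol.dphi ht)).add (deriv_v hsol hic hp hz ht))
    (fun t ht => by
      have : 0 < r (u, t) := by linarith [hrr t (Ioo_subset_Icc_self ht)]
      exact (hasDerivAt_const t _).div ((deriv_v hsol hic hp hsol.dr ht).pow 2) (by positivity))
    (fun t ht => by
      have ht' := Ioo_subset_Icc_self ht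
      obtain ⟨b1, b2, b3, b4, b5⟩ := hb.at_v hu ht
      have hD := seg_v hsol hic hp ht'
      have hb' := hb.below (u' := u) (v' := t) le_rfl ht.2.le
      have hm := m_nonneg hm₀ hsol hic hD hb'
      have hi := integrand_bound hP hm (hrr t ht') b4.le
      have hnu := nu_ge hP hm₀ hsol hic hD hb'
      have hrp : 0 < r (u, t) := by linarith [hrr t ht']
      have hphi : |φ (u, t)| ≤ α * C / r (u, t) := by
        rw [abs_mul, abs_of_pos hrp] at b5
        rw [le_div_iff₀ hrp]
        linarith
      rw [hsol.eq_zeta _ hD, hsol.eq_nu _ hD]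
      have e : pdu D r (u, t) * (2 * pdv D r (u, t) / (1 - 2 * m (u, t) / r (u, t))) *
          (m (u, t) / r (u, t) ^ 2) * φ (u, t) + pdu D r (u, t) * pdv D φ (u, t) +
          -(r (u, t) * pdv D φ (u, t)) * pdu D r (u, t) / r (u, t) =
          pdu D r (u, t) * pdv D r (u, t) * (2 / (1 - 2 * m (u, t) / r (u, t)) *
            (m (u, t) / r (u, t) ^ 2)) * φ (u, t) := by
        have : -(r (u, t) * pdv D φ (u, t)) * pdu D r (u, t) / r (u, t) =
          -(pdu D r (u, t) * pdv D φ (u, t)) := by field_simp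
        rw [this]
        ring
      rw [e, abs_mul, abs_mul, abs_mul, abs_of_neg b2, abs_of_pos b1]
      have hi0 : 0 ≤ 2 / (1 - 2 * m (u, t) / r (u, t)) * (m (u, t) / r (u, t) ^ 2) :=
        mul_nonneg (div_nonneg (by norm_num) b3.le) (by positivity)
      rw [abs_of_nonneg hi0]
      calc -pdu D r (u, t) * pdv D r (u, t) * (2 / (1 - 2 * m (u, t) / r (u, t)) *
            (m (u, t) / r (u, t) ^ 2)) * |φ (u, t)|
          ≤ α * pdv D r (u, t) * (4 * α ^ 2 * M / r (u, t) ^ 2) * (α * C / r (u, t)) := by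
            gcongr
            linarith
        _ = _ := by
            field_simp
            push_cast
            ring)
  rw [r_ray hsol hic hu] at h
  have h0 := hic.durphi_bound u hu
  rw [pdu_mul hsol (hic.ray_in u hu), r_ray hsol hic hu] at h0
  have hpos : 0 ≤ 2 * α ^ 4 * M * C / r (u, v) ^ 2 := by positivity
  have htri := abs_sub_abs_le_abs_sub
    (pdu D r (u, v) * φ (u, v) + r (u, v) * pdu D φ (u, v))
    (pdu D r (u, R) * φ (u, R) + -u * pdu D φ (u, R))
  have hu2 : 0 < u ^ 2 := by nlinarith
  have hfin : C / u ^ 2 + 2 * α ^ 4 * M * C / (-u) ^ 2 ≤ (1 + 16 * α ^ 4 * M) * C / u ^ 2 := by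
    rw [neg_sq, ← add_div]
    gcongr
    have : 0 < α ^ 4 * M * C := by positivity
    linarith
  linarith

lemma A_sq_lt (hP : Params R C M α) : (1 + 16 * α ^ 4 * M) ^ 2 < α ^ 2 * R := by
  have h := hP.hR3
  have hα := hP.hα
  rw [gt_iff_lt, div_lt_iff₀ (by positivity)] at h
  linarith

/-- The two conditions `A² < α² R` and `(4α)² < (α-1)² R` combine to `4 A < (α-1) R`. -/
lemma A_lt (hP : Params R C M α) : 4 * (1 + 16 * α ^ 4 * M) < (α - 1) * R := by
  have hα := hP.hα
  have hM := hP.hM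
  have hR1 := hP.hR1
  have h1 := A_sq_lt hP
  have h2 := hP.hR2
  rw [gt_iff_lt, div_pow, div_lt_iff₀ (by have : 0 < α - 1 := by linarith
                                          positivity)] at h2
  have h3 : 0 < (α - 1) * R := mul_pos (by linarith) (by linarith)
  refine lt_of_pow_lt_pow_left₀ 2 h3.le ?_
  nlinarith

lemma rphi_lt (hP : Params R C M α) (hm₀ : 0 ≤ m₀) (hsol : EFSol R D r m φ)
    (hic : CharIC R C M m₀ D r m φ) (hp : (u, v) ∈ D)
    (hb : BootBelow R α C M D r m φ (u, v)) : |r (u, v) * φ (u, v)| < α * C := by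
  obtain ⟨hu, hv⟩ := hsol.bds hp
  have hα := hP.hα
  have hM := hP.hM
  have hC := hP.hC
  have hR1 := hP.hR1
  set A := 1 + 16 * α ^ 4 * M with hA
  have hApos : 0 < A := by positivity
  have h := abs_seg (g := fun s => r (s, v) * φ (s, v))
    (g' := fun s => pdu D r (s, v) * φ (s, v) + r (s, v) * pdu D φ (s, v))
    (h := fun s => A * C * s⁻¹) (h' := fun s => A * C * (-(s ^ 2)⁻¹)) hu
    ((cont_u hsol hic hp hsol.dr).mul (cont_u hsol hic hp hsol.dphi))
    (continuousOn_const.mul (continuousOn_id.inv₀ fun s hs => by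
      simp only [id]; linarith [hs.2]))
    (fun s hs => (deriv_u hsol hic hp hsol.dr hs).mul (deriv_u hsol hic hp hsol.dphi hs))
    (fun s hs => (hasDerivAt_inv (by linarith [hs.2])).const_mul _)
    (fun s hs => by
      refine (w_bound hP hm₀ hsol hic (seg_u hsol hic hp (Ioo_subset_Icc_self hs))
        (hb.below hs.1.le le_rfl)).trans (le_of_eq ?_)
      rw [← hA]
      ring)
  have h0 := hic.rphi_bound v hv
  have htri := abs_sub_abs_le_abs_sub (r (u, v) * φ (u, v)) (r (-R, v) * φ (-R, v))
  rw [abs_sub_comm] at htri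
  have hneg : A * C * u⁻¹ ≤ 0 :=
    mul_nonpos_of_nonneg_of_nonpos (by positivity) (inv_nonpos.2 (by linarith))
  have hA4 : A * C * R⁻¹ < (α - 1) * C := by
    have := A_lt hP
    rw [← hA] at this
    rw [← div_eq_mul_inv, div_lt_iff₀ (by linarith)]
    nlinarith
  simp only [inv_neg] at h
  linarith

/-- With `ζ = w - νφ` and `w = νφ + ζ`, the flux `½(1-μ)ζ²/|ν|` is at most `w² + |ν|φ²`, hence at
most `α²C² (1/u² + |ν|/r²)`, which is a `u`-derivative. -/
lemma m_lt (hP : Params R C M α) (hm₀ : 0 ≤ m₀) (hsol : EFSol R D r m φ)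
    (hic : CharIC R C M m₀ D r m φ) (hp : (u, v) ∈ D)
    (hb : BootBelow R α C M D r m φ (u, v)) : m (u, v) < α * M := by
  obtain ⟨hu, hv⟩ := hsol.bds hp
  have hα := hP.hα
  have hM := hP.hM
  have hC := hP.hC
  have hR1 := hP.hR1
  have hrr : ∀ s ∈ Icc u (-R), R ≤ r (s, v) := fun s hs => by
    have := r_ge hsol hic (seg_u hsol hic hp hs) (hb.below hs.1 le_rfl)
    linarith [hs.2]
  have h := mono_seg
    (g := fun s => m (s, v) - α ^ 2 * C ^ 2 * s⁻¹ + α ^ 2 * C ^ 2 / r (s, v))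
    (g' := fun s => pdu D m (s, v) - α ^ 2 * C ^ 2 * (-(s ^ 2)⁻¹) +
      (0 * r (s, v) - α ^ 2 * C ^ 2 * pdu D r (s, v)) / r (s, v) ^ 2) hu
    (((cont_u hsol hic hp hsol.dm).sub (continuousOn_const.mul (continuousOn_id.inv₀ fun s hs => by
      simp only [id]; linarith [hs.2]))).add
      (continuousOn_const.div (cont_u hsol hic hp hsol.dr) fun s hs => by linarith [hrr s hs]))
    (fun s hs => ((deriv_u hsol hic hp hsol.dm hs).sub
      ((hasDerivAt_inv (by linarith [hs.2])).const_mul _)).add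
      ((hasDerivAt_const s _).div (deriv_u hsol hic hp hsol.dr hs)
        (by linarith [hrr s (Ioo_subset_Icc_self hs)])))
    (fun s hs => by
      have hs' := Ioo_subset_Icc_self hs
      obtain ⟨b1, b2, b3, b4, b5⟩ := hb.at_u hv hs
      have hD := seg_u hsol hic hp hs'
      have hb' := hb.below (u' := s) (v' := v) hs.1.le le_rfl
      have hm := m_nonneg hm₀ hsol hic hD hb'
      have hnu := nu_le hm₀ hsol hic hD hb'
      have hw := w_bound hP hm₀ hsol hic hD hb'
      have hrp : 0 < r (s, v) := by linarith [hrr s hs']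
      have heq := hsol.eq_mu _ hD
      have hmu : 1 - 2 * m (s, v) / r (s, v) ≤ 1 := by
        have : 0 ≤ 2 * m (s, v) / r (s, v) := by positivity
        linarith
      generalize hWd : pdu D r (s, v) * φ (s, v) + r (s, v) * pdu D φ (s, v) = W at hw
      have hs2 : 1 ≤ s ^ 2 := by nlinarith [hs.2]
      have hsR : R ≤ s ^ 2 := by nlinarith [hs.2]
      have hW2 : W ^ 2 ≤ α ^ 2 * C ^ 2 / s ^ 2 := by
        have h1 : W ^ 2 ≤ ((1 + 16 * α ^ 4 * M) * C / s ^ 2) ^ 2 := by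
          rw [← sq_abs W]
          gcongr
        refine h1.trans ?_
        rw [div_pow, div_le_div_iff₀ (by positivity) (by positivity)]
        have h2 := A_sq_lt hP
        have h3 : (1 + 16 * α ^ 4 * M) ^ 2 ≤ α ^ 2 * s ^ 2 := by nlinarith [sq_nonneg α]
        calc ((1 + 16 * α ^ 4 * M) * C) ^ 2 * s ^ 2
            = (1 + 16 * α ^ 4 * M) ^ 2 * (C ^ 2 * s ^ 2) := by ring
          _ ≤ α ^ 2 * s ^ 2 * (C ^ 2 * s ^ 2) := by gcongr
          _ = _ := by ring
      have hphi2 : φ (s, v) ^ 2 ≤ α ^ 2 * C ^ 2 / r (s, v) ^ 2 := by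
        rw [le_div_iff₀ (by positivity)]
        have : |r (s, v) * φ (s, v)| ^ 2 ≤ (α * C) ^ 2 := by gcongr
        rw [sq_abs] at this
        linarith
      set N := -pdu D r (s, v) with hN
      have hN' : pdu D r (s, v) = -N := by rw [hN]; ring
      have hN1 : 1 ≤ N := by linarith
      have hzeta : r (s, v) * pdu D φ (s, v) = W + N * φ (s, v) := by
        rw [← hWd, hN']; ring
      rw [hzeta, hN'] at heq
      have key : N * -pdu D m (s, v) ≤ N * (W ^ 2 + N * φ (s, v) ^ 2) := by
        have h1 : N * -pdu D m (s, v) ≤ 1 / 2 * 1 * (W + N * φ (s, v)) ^ 2 := by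
          have : N * -pdu D m (s, v) = -N * pdu D m (s, v) := by ring
          rw [this, heq]
          gcongr
        have h2 : W ^ 2 ≤ N * W ^ 2 := le_mul_of_one_le_left (sq_nonneg _) hN1
        nlinarith [sq_nonneg (W - N * φ (s, v))]
      have key2 := le_of_mul_le_mul_left key (by linarith)
      have h5 : N * φ (s, v) ^ 2 ≤ N * (α ^ 2 * C ^ 2 / r (s, v) ^ 2) := by gcongr
      have e : pdu D m (s, v) - α ^ 2 * C ^ 2 * (-(s ^ 2)⁻¹) +
          (0 * r (s, v) - α ^ 2 * C ^ 2 * pdu D r (s, v)) / r (s, v) ^ 2 =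
          pdu D m (s, v) + α ^ 2 * C ^ 2 / s ^ 2 + N * (α ^ 2 * C ^ 2 / r (s, v) ^ 2) := by
        rw [hN']
        ring
      rw [e]
      linarith)
  have h0 := hic.m_bound_out v hv
  have hneg : α ^ 2 * C ^ 2 * u⁻¹ ≤ 0 :=
    mul_nonpos_of_nonneg_of_nonpos (by positivity) (inv_nonpos.2 (by linarith))
  have hpos : 0 ≤ α ^ 2 * C ^ 2 / r (u, v) := by
    have := hsol.rpos _ hp
    positivity
  have hrR : α ^ 2 * C ^ 2 / r (-R, v) ≤ α ^ 2 * C ^ 2 / R := by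
    gcongr
    exact hrr _ ⟨hu, le_rfl⟩
  have h5 := hP.hR5
  have h6 : 6 * (α ^ 2 * C ^ 2 / R) < (α - 1) * M := by
    rw [← mul_div_assoc, div_lt_iff₀ (by linarith)]
    linarith
  have h7 : 0 ≤ α ^ 2 * C ^ 2 / R := by positivity
  simp only [inv_neg] at h
  rw [div_eq_mul_inv _ R] at h6 h7 hrR
  linarith

/-! ### The continuity argument -/

lemma boot_of_below (hP : Params R C M α) (hm₀ : 0 ≤ m₀) (hsol : EFSol R D r m φ)
    (hic : CharIC R C M m₀ D r m φ) (hp : (u, v) ∈ D)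
    (hb : BootBelow R α C M D r m φ (u, v)) : Boot α C M D r m φ (u, v) := by
  have hα := hP.hα
  have hm := m_lt hP hm₀ hsol hic hp hb
  have hr : R ≤ r (u, v) := by
    linarith [r_ge hsol hic hp hb, (hsol.bds hp).1]
  have hmu := mu_bound hP hr hm.le
  have h2 : 0 < 1 / (2 * α) := by positivity
  exact ⟨by linarith [lam_ge hm₀ hsol hic hp hb], by linarith [nu_le hm₀ hsol hic hp hb],
    by linarith, hm, rphi_lt hP hm₀ hsol hic hp hb⟩

/-- Otherwise the compact set of bad points in the rectangle below a bad point would contain one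
minimizing `v - u`; every other point below that minimizer is good, contradicting
`boot_of_below`. -/
lemma boot_all (hP : Params R C M α) (hm₀ : 0 ≤ m₀) (hsol : EFSol R D r m φ)
    (hic : CharIC R C M m₀ D r m φ) (hp : p ∈ D) : Boot α C M D r m φ p := by
  by_contra hbad
  set K : Set (ℝ × ℝ) := Icc p.1 (-R) ×ˢ Icc R p.2 with hK
  have hKD : K ⊆ D := fun q hq => hic.past p hp q ⟨hq.1.2, hq.2.1⟩ hq.1.1 hq.2.2
  have hKc : IsCompact K := isCompact_Icc.prod isCompact_Icc
  set G : ℝ × ℝ → ℝ := fun q => min (pdv D r q) (min (-pdu D r q)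
    (min (1 - 2 * m q / r q) (min (α * M - m q) (α * C - |r q * φ q|)))) with hG
  have hGB : ∀ q, 0 < G q ↔ Boot α C M D r m φ q := fun q => by
    simp only [hG, lt_min_iff, Boot, sub_pos, Left.neg_pos_iff]
  have hGc : ContinuousOn G K := by
    have c1 := (hsol.diff_pdv hsol.hr).continuousOn.mono hKD
    have c2 := (hsol.diff_pdu hsol.hr).continuousOn.mono hKD
    have c3 := hsol.dr.continuousOn.mono hKD
    have c4 := hsol.dm.continuousOn.mono hKD
    have c5 := hsol.dphi.continuousOn.mono hKD
    exact c1.inf (c2.neg.inf ((continuousOn_const.sub ((continuousOn_const.mul c4).div c3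
      fun q hq => (hsol.rpos q (hKD hq)).ne')).inf
      ((continuousOn_const.sub c4).inf (continuousOn_const.sub (c3.mul c5).abs))))
  have hBc : IsCompact (K ∩ G ⁻¹' Iic 0) :=
    hKc.of_isClosed_subset (hGc.preimage_isClosed_of_isClosed hKc.isClosed isClosed_Iic)
      inter_subset_left
  have hpK : p ∈ K := by
    have h := hsol.subset hp
    exact ⟨⟨le_rfl, h.1⟩, ⟨h.2, le_rfl⟩⟩
  have hne : (K ∩ G ⁻¹' Iic 0).Nonempty :=
    ⟨p, hpK, not_lt.1 fun h => hbad ((hGB p).1 h)⟩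
  obtain ⟨⟨u, v⟩, hq, hmin⟩ := hBc.exists_isMinOn (f := fun q : ℝ × ℝ => q.2 - q.1) hne
    (by fun_prop)
  refine not_lt.2 hq.2 ((hGB _).2 (boot_of_below hP hm₀ hsol hic (hKD hq.1) ?_))
  intro q hqQ h1 h2 hqne
  by_contra hqb
  have hqB : q ∈ K ∩ G ⁻¹' Iic 0 :=
    ⟨⟨⟨hq.1.1.1.trans h1, hqQ.1⟩, ⟨hqQ.2, h2.trans hq.1.2.2⟩⟩,
      not_lt.1 fun h => hqb ((hGB q).1 h)⟩
  have h3 : v - u ≤ q.2 - q.1 := hmin hqB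
  simp only at h1 h2
  exact hqne (Prod.ext (by simp only; linarith) (by simp only; linarith))

end

/-- Global estimates for the characteristic problem `Γ`.  For
`α > 1` and `R` large enough (as quantified below), any solution on `D`
satisfying the characteristic initial conditions with parameters `C`, `M`, `m₀`
satisfies, throughout `D`: `|rφ| ≤ αC`, `|νφ + ζ| ≤ (1+16α⁴M)C/u²`,
`-α ≤ ν ≤ -1`, `1 ≤ λ ≤ α`, `1-μ ≥ 1/(2α)`, `r ≥ R`, and `m ≤ αM`. -/
theorem global_estimates (R C M m₀ α : ℝ) (hα : 1 < α) (hC : 0 < C)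
    (hM : 0 < M) (hm₀ : m₀ ∈ Icc 0 M)
    (hR1 : 1 ≤ R) (hR2 : R > (4 * α / (α - 1)) ^ 2)
    (hR3 : R > (1 + 16 * α ^ 4 * M) ^ 2 / α ^ 2)
    (hR4 : R > 8 * α ^ 2 * M / Real.log α)
    (hR5 : 6 * α ^ 2 * C ^ 2 < (α - 1) * M * R)
    (hR6 : R > 4 * α ^ 2 * M / (α - 1))
    (D : Set (ℝ × ℝ)) (r m φ : ℝ × ℝ → ℝ) (hsol : EFSol R D r m φ)
    (hic : CharIC R C M m₀ D r m φ) :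
    ∀ p ∈ D,
      |r p * φ p| ≤ α * C ∧
      |pdu D r p * φ p + r p * pdu D φ p| ≤ (1 + 16 * α ^ 4 * M) * C / p.1 ^ 2 ∧
      (-α ≤ pdu D r p ∧ pdu D r p ≤ -1) ∧
      (1 ≤ pdv D r p ∧ pdv D r p ≤ α) ∧
      1 / (2 * α) ≤ 1 - 2 * m p / r p ∧
      R ≤ r p ∧
      m p ≤ α * M := by
  intro p hp
  have hP : Params R C M α := ⟨hα, hC, hM, hR1, hR2, hR3, hR4, hR5, hR6⟩
  have hB : ∀ q ∈ D, Boot α C M D r m φ q := fun q hq => boot_all hP hm₀.1 hsol hic hq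
  obtain ⟨u, v⟩ := p
  have hb : BootBelow R α C M D r m φ (u, v) := fun q hq h1 h2 _ =>
    hB q (hic.past _ hp q hq h1 h2)
  obtain ⟨-, -, -, hm, hrphi⟩ := hB _ hp
  have hr : R ≤ r (u, v) := by
    linarith [r_ge hsol hic hp hb, (hsol.bds hp).1]
  exact ⟨hrphi.le, w_bound hP hm₀.1 hsol hic hp hb,
    ⟨nu_ge hP hm₀.1 hsol hic hp hb, nu_le hm₀.1 hsol hic hp hb⟩,
    ⟨lam_ge hm₀.1 hsol hic hp hb, lam_le hP hm₀.1 hsol hic hp hb⟩,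
    mu_bound hP hr hm.le, hr, hm.le⟩
end
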